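/- Fix a prime power q and ε ∈ (0,1/2). There exist constants c, C > 0 (depending only on q and ε) such that for every δ > 0 there is an integer N with the following property: for all integers n ≥ N and all integers m with (1+ε)·(log n)/(log q) ≤ m ≤ (2−ε)·(log n)/(log q), one has (1−δ)·G_q(x)·exp( −C·n³/(m·q^{2m}) ) ≤ p_{n,m,q}/p_{n,m} ≤ (1+δ)·G_q(x)·exp( −c·n³/(m·q^{2m}) ). -/

import Mathlib

open Real

noncomputable section

/-- Predicate characterizing the Dickman function `ρ : [0,∞) → (0,∞)`:
continuous on `[0,∞)`, positive, equal to `1` on `[0,1]`, and satisfying the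
delay differential equation `t·ρ'(t) + ρ(t-1) = 0` for `t > 1`. -/
def IsDickman (ρ : ℝ → ℝ) : Prop :=
  ContinuousOn ρ (Set.Ici 0) ∧
  (∀ t : ℝ, 0 ≤ t → 0 < ρ t) ∧
  (∀ t ∈ Set.Icc (0:ℝ) 1, ρ t = 1) ∧
  (∀ t : ℝ, 1 < t → HasDerivAt ρ (-(ρ (t - 1)) / t) t)

/-- `ξ(u)`: for `u > 1`, the unique positive solution of `e^ξ = 1 + u·ξ`; otherwise `0`. -/
def xi (u : ℝ) : ℝ :=
  open Classical in
  if h : ∃ x : ℝ, 0 < x ∧ Real.exp x = 1 + u * x then h.choose else 0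

/-- `p_{n,m}`: probability that a uniformly random permutation of `{1,…,n}` is `m`-friable,
i.e. has no cycle of length greater than `m`. -/
def permProb (n m : ℕ) : ℝ :=
  (Nat.card {σ : Equiv.Perm (Fin n) // ∀ c ∈ σ.cycleType, c ≤ m} : ℝ) /
    (Nat.factorial n : ℝ)

/-- `p_{n,m,q}`: proportion of monic polynomials of degree `n` over a finite field `F`
(of cardinality `q`) that are `m`-friable, i.e. all of whose monic irreducible factors
have degree at most `m`. -/
def polyProb (F : Type) [Field F] [Fintype F] (n m : ℕ) : ℝ :=
  (Nat.card {f : Polynomial F // f.Monic ∧ f.natDegree = n ∧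
      ∀ p : Polynomial F, p.Monic → Irreducible p → p ∣ f → p.natDegree ≤ m} : ℝ) /
    (Fintype.card F : ℝ) ^ n

/-- `F_q(z) = ∏_{deg P ≤ m} (1 - (z/q)^{deg P})⁻¹`, the product over monic irreducible
polynomials `P` over `F` of degree at most `m`. -/
def FqFun (F : Type) [Field F] [Fintype F] (m : ℕ) (z : ℝ) : ℝ :=
  ∏ᶠ p ∈ {p : Polynomial F | p.Monic ∧ Irreducible p ∧ p.natDegree ≤ m},
    (1 - (z / (Fintype.card F : ℝ)) ^ p.natDegree)⁻¹

/-- `G_q(z) = F_q(z) · exp(-∑_{i=1}^m z^i/i)`. -/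
def Gq (F : Type) [Field F] [Fintype F] (m : ℕ) (z : ℝ) : ℝ :=
  FqFun F m z * Real.exp (-(∑ i ∈ Finset.Icc 1 m, z ^ i / (i : ℝ)))

/-- The coefficients `d_{m,i}`. -/
def dcoef (m i : ℕ) : ℝ :=
  if i = m then -(1 / (m : ℝ)) * ∑ j ∈ Finset.Icc 2 m, (1 : ℝ) / (j : ℝ)
  else Real.Gamma ((i : ℝ) + (i : ℝ) / (m : ℝ)) /
    (((m : ℝ) - (i : ℝ)) * (Nat.factorial i : ℝ) * Real.Gamma (1 + (i : ℝ) / (m : ℝ)))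

/-- `T(s) = ∫₀^s ((e^t - 1)/t)·((t/m)/(1 - e^{-t/m}) - 1) dt`, integrand extended by `0` at `t = 0`. -/
def Tfun (m : ℕ) (s : ℝ) : ℝ :=
  ∫ t in (0:ℝ)..s,
    if t = 0 then 0 else
      ((Real.exp t - 1) / t) * ((t / (m : ℝ)) / (1 - Real.exp (-t / (m : ℝ))) - 1)

end


/-- The recurrence `n c_n = ∑ l_i c_{n-i}` of an exponential of a power series. -/
def ERec (l c : ℕ → ℝ) : Prop :=
  c 0 = 1 ∧ ∀ n : ℕ, (n : ℝ) * c n = ∑ ij ∈ Finset.HasAntidiagonal.antidiagonal n, l ij.1 * c ij.2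

theorem ERec.unique {l c d : ℕ → ℝ} (hl : l 0 = 0) (hc : ERec l c) (hd : ERec l d) : c = d := by
  funext n
  induction n using Nat.strong_induction_on with
  | _ n ih =>
    rcases Nat.eq_zero_or_pos n with rfl | hn
    · rw [hc.1, hd.1]
    · have h : (n : ℝ) * c n = (n : ℝ) * d n := by
        rw [hc.2 n, hd.2 n]
        refine Finset.sum_congr rfl fun ij hij => ?_
        rw [Finset.HasAntidiagonal.mem_antidiagonal] at hij
        rcases Nat.eq_zero_or_pos ij.1 with h0 | h0
        · rw [h0, hl]; simp
        · rw [ih ij.2 (by omega)]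
      have hn' : (n : ℝ) ≠ 0 := by positivity
      exact mul_left_cancel₀ hn' h

/-- solution of the recurrence -/
noncomputable def eSol (l : ℕ → ℝ) : ℕ → ℝ
  | 0 => 1
  | (n + 1) => (∑ i : Fin (n + 1), l (n + 1 - i) * eSol l i) / (n + 1)

theorem eSol_rec {l : ℕ → ℝ} (hl : l 0 = 0) : ERec l (eSol l) := by
  refine ⟨by rw [eSol], fun n => ?_⟩
  rcases n with _ | n
  · simp [hl]
  · rw [Finset.Nat.sum_antidiagonal_eq_sum_range_succ_mk, eSol]
    rw [← Finset.sum_range_reflect, Finset.sum_range_succ]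
    have h1 : n.succ + 1 - 1 - (n+1) = 0 := by omega
    simp only [Nat.succ_eq_add_one, h1] at *
    simp only [Nat.add_sub_cancel, hl, zero_mul, add_zero]
    rw [Finset.sum_fin_eq_sum_range]
    push_cast
    rw [mul_div_cancel₀ _ (by positivity)]
    refine Finset.sum_congr rfl fun i hi => ?_
    rw [Finset.mem_range] at hi
    rw [dif_pos hi]
    congr 2
    omega

theorem eSol_nonneg {l : ℕ → ℝ} (hl : ∀ i, 0 ≤ l i) (n : ℕ) : 0 ≤ eSol l n := by
  induction n using Nat.strong_induction_on with
  | _ n ih =>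
    rcases n with _ | n
    · rw [eSol]; norm_num
    · rw [eSol]
      refine div_nonneg (Finset.sum_nonneg fun i _ => mul_nonneg (hl _) (ih _ i.2)) (by positivity)

theorem ERec.ps {l c : ℕ → ℝ} : (∀ n : ℕ, (n : ℝ) * c n = ∑ ij ∈ Finset.HasAntidiagonal.antidiagonal n, l ij.1 * c ij.2)
    ↔ PowerSeries.X * PowerSeries.derivative ℝ (PowerSeries.mk c) = PowerSeries.mk l * PowerSeries.mk c := by
  rw [PowerSeries.ext_iff]
  refine forall_congr' fun n => ?_
  rw [PowerSeries.coeff_mul (φ := PowerSeries.mk l)]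
  simp only [PowerSeries.coeff_mk]
  rcases n with _ | n
  · simp
  · rw [PowerSeries.coeff_succ_X_mul, PowerSeries.coeff_derivative, PowerSeries.coeff_mk]
    push_cast
    rw [mul_comm]

theorem ERec.mul {l c l' c' : ℕ → ℝ} (h : ERec l c) (h' : ERec l' c') :
    ERec (fun n => l n + l' n) (fun n => ∑ ij ∈ Finset.HasAntidiagonal.antidiagonal n, c ij.1 * c' ij.2) := by
  refine ⟨by simp [h.1, h'.1], ?_⟩
  have e : PowerSeries.mk (fun n => ∑ ij ∈ Finset.HasAntidiagonal.antidiagonal n, c ij.1 * c' ij.2)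
      = PowerSeries.mk c * PowerSeries.mk c' := by
    ext n; rw [PowerSeries.coeff_mul]; simp
  have e2 : PowerSeries.mk (fun n => l n + l' n) = PowerSeries.mk l + PowerSeries.mk l' := by
    ext n; simp
  refine (ERec.ps (l := fun n => l n + l' n) (c := fun n => ∑ ij ∈ Finset.HasAntidiagonal.antidiagonal n, c ij.1 * c' ij.2)).2 ?_
  rw [e, e2]
  have h1 := ERec.ps.1 h.2
  have h2 := ERec.ps.1 h'.2
  rw [Derivation.leibniz, smul_eq_mul, smul_eq_mul]
  linear_combination (PowerSeries.mk c') * h1 + PowerSeries.mk c * h2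

theorem ERec.pos {l c : ℕ → ℝ} (h : ERec l c) (hl : ∀ i, 0 ≤ l i) (hl0 : l 0 = 0) (hl1 : 0 < l 1) (n : ℕ) :
    0 < c n := by
  induction n using Nat.strong_induction_on with
  | _ n ih =>
    rcases n with _ | n
    · rw [h.1]; norm_num
    · have h2 := h.2 (n+1)
      have : 0 < ∑ ij ∈ Finset.HasAntidiagonal.antidiagonal (n+1), l ij.1 * c ij.2 := by
        refine Finset.sum_pos' ?_ ⟨(1, n), by simp [add_comm], mul_pos hl1 (ih n (by omega))⟩
        intro ij hij
        rw [Finset.HasAntidiagonal.mem_antidiagonal] at hij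
        rcases Nat.eq_zero_or_pos ij.1 with h0 | h0
        · rw [h0, hl0]; simp
        · exact mul_nonneg (hl _) (ih _ (by omega)).le
      rw [← h2] at this
      exact pos_of_mul_pos_right this (by positivity)

/-- the factor in the class size of a cycle type -/
def cyD (s : Multiset ℕ) : ℕ := s.prod * ∏ i ∈ s.toFinset, (s.count i).factorial

theorem cyD_prod_superset (s : Multiset ℕ) (S : Finset ℕ) (h : s.toFinset ⊆ S) :
    ∏ i ∈ s.toFinset, (s.count i).factorial = ∏ i ∈ S, (s.count i).factorial := by
  refine Finset.prod_subset h fun i _ hi => ?_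
  rw [Multiset.mem_toFinset] at hi
  rw [Multiset.count_eq_zero_of_notMem hi]; rfl

theorem cyD_cons (i : ℕ) (t : Multiset ℕ) :
    cyD (i ::ₘ t) = (i * (t.count i + 1)) * cyD t := by
  unfold cyD
  rw [cyD_prod_superset t (i ::ₘ t).toFinset (by simp [Finset.subset_insert]), Multiset.prod_cons]
  have hi : i ∈ (i ::ₘ t).toFinset := by simp
  rw [← Finset.mul_prod_erase _ _ hi, ← Finset.mul_prod_erase _ _ hi]
  have : ∏ x ∈ (i ::ₘ t).toFinset.erase i, (Multiset.count x (i ::ₘ t)).factorial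
      = ∏ x ∈ (i ::ₘ t).toFinset.erase i, (Multiset.count x t).factorial := by
    refine Finset.prod_congr rfl fun x hx => ?_
    rw [Multiset.count_cons_of_ne (Finset.ne_of_mem_erase hx)]
  rw [this, Multiset.count_cons_self, Nat.factorial_succ]
  ring

/-- multisets of parts in `[1,m]` with sum `n` -/
noncomputable def cyT (m n : ℕ) : Finset (Multiset ℕ) :=
  ((Finset.univ : Finset (Nat.Partition n)).image Nat.Partition.parts).filter fun s => ∀ i ∈ s, i ≤ m

theorem mem_cyT {m n : ℕ} {s : Multiset ℕ} :
    s ∈ cyT m n ↔ (∀ i ∈ s, 0 < i) ∧ (∀ i ∈ s, i ≤ m) ∧ s.sum = n := by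
  unfold cyT
  rw [Finset.mem_filter, Finset.mem_image]
  constructor
  · rintro ⟨⟨p, _, rfl⟩, h⟩
    exact ⟨fun i hi => p.parts_pos hi, h, p.parts_sum⟩
  · rintro ⟨h1, h2, h3⟩
    exact ⟨⟨⟨s, fun {i} hi => h1 i hi, h3⟩, Finset.mem_univ _, rfl⟩, h2⟩

/-- weighted sum over cycle types -/
noncomputable def cyP (m n : ℕ) : ℝ := ∑ s ∈ cyT m n, (1 : ℝ) / (cyD s : ℝ)

theorem cyD_pos {s : Multiset ℕ} (h : ∀ i ∈ s, 0 < i) : 0 < cyD s := by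
  unfold cyD
  exact Nat.mul_pos (Multiset.prod_pos h) (Finset.prod_pos fun i _ => Nat.factorial_pos _)

theorem cyP_zero (m : ℕ) : cyP m 0 = 1 := by
  have : cyT m 0 = {0} := by
    ext s
    rw [mem_cyT, Finset.mem_singleton]
    constructor
    · rintro ⟨h1, h2, h3⟩
      rw [Multiset.sum_eq_zero_iff] at h3
      by_contra hs
      obtain ⟨i, hi⟩ := Multiset.exists_mem_of_ne_zero hs
      exact (h1 i hi).ne' (h3 i hi)
    · rintro rfl; simp
  unfold cyP
  rw [this]; simp [cyD]

theorem cyP_rec (m : ℕ) : ERec (fun i => if 1 ≤ i ∧ i ≤ m then 1 else 0) (cyP m) := by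
  refine ⟨cyP_zero m, fun n => ?_⟩
  have h1 : (n : ℝ) * cyP m n = ∑ s ∈ cyT m n, ∑ i ∈ s.toFinset, (1 : ℝ) / (cyD (s.erase i) : ℝ) := by
    unfold cyP
    rw [Finset.mul_sum]
    refine Finset.sum_congr rfl fun s hs => ?_
    rw [mem_cyT] at hs
    have hsum : (n : ℝ) = ∑ i ∈ s.toFinset, ((s.count i : ℝ) * i) := by
      rw [← hs.2.2, Finset.sum_multiset_count]
      push_cast
      simp
    rw [hsum, Finset.sum_mul]
    refine Finset.sum_congr rfl fun i hi => ?_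
    rw [Multiset.mem_toFinset] at hi
    obtain ⟨t, rfl⟩ := Multiset.exists_cons_of_mem hi
    rw [Multiset.erase_cons_head, cyD_cons, Multiset.count_cons_self]
    have h0 : (cyD t : ℝ) ≠ 0 := by
      have := cyD_pos (s := t) (fun j hj => hs.1 j (Multiset.mem_cons_of_mem hj))
      positivity
    have hi0 : (i : ℝ) ≠ 0 := by
      have := hs.1 i hi
      positivity
    push_cast
    field_simp
  rw [h1, Finset.sum_sigma']
  have h2 : ∑ ij ∈ Finset.HasAntidiagonal.antidiagonal n,
      (if 1 ≤ ij.1 ∧ ij.1 ≤ m then (1:ℝ) else 0) * cyP m ij.2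
      = ∑ x ∈ ((Finset.HasAntidiagonal.antidiagonal n).filter fun ij : ℕ × ℕ => 1 ≤ ij.1 ∧ ij.1 ≤ m).sigma
          (fun ij => cyT m ij.2), (1 : ℝ) / (cyD x.2 : ℝ) := by
    rw [Finset.sum_sigma, Finset.sum_filter]
    refine Finset.sum_congr rfl fun ij _ => ?_
    unfold cyP
    split_ifs <;> simp
  rw [h2]
  refine Finset.sum_bij' (fun x _ => ⟨(x.2, n - x.2), x.1.erase x.2⟩) (fun y _ => ⟨y.1.1 ::ₘ y.2, y.1.1⟩)
    ?_ ?_ ?_ ?_ ?_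
  · rintro ⟨s, i⟩ h
    simp only [Finset.mem_sigma, mem_cyT, Multiset.mem_toFinset, Finset.mem_filter,
      Finset.HasAntidiagonal.mem_antidiagonal] at h ⊢
    obtain ⟨⟨h1, h2, h3⟩, hi⟩ := h
    obtain ⟨t, rfl⟩ := Multiset.exists_cons_of_mem hi
    rw [Multiset.sum_cons] at h3
    rw [Multiset.erase_cons_head]
    refine ⟨⟨by omega, h1 i hi, h2 i hi⟩, fun j hj => h1 j (Multiset.mem_cons_of_mem hj),
      fun j hj => h2 j (Multiset.mem_cons_of_mem hj), by omega⟩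
  · rintro ⟨⟨i, k⟩, t⟩ h
    simp only [Finset.mem_sigma, mem_cyT, Multiset.mem_toFinset, Finset.mem_filter,
      Finset.HasAntidiagonal.mem_antidiagonal] at h ⊢
    obtain ⟨⟨h1, h2, h3⟩, h4, h5, h6⟩ := h
    refine ⟨⟨?_, ?_, ?_⟩, by simp⟩
    · intro j hj
      rcases Multiset.mem_cons.1 hj with rfl | hj
      · omega
      · exact h4 j hj
    · intro j hj
      rcases Multiset.mem_cons.1 hj with rfl | hj
      · omega
      · exact h5 j hj
    · rw [Multiset.sum_cons]; omega
  · rintro ⟨s, i⟩ h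
    simp only [Finset.mem_sigma, Multiset.mem_toFinset] at h
    simp [Multiset.cons_erase h.2]
  · rintro ⟨⟨i, k⟩, t⟩ h
    simp only [Finset.mem_sigma, Finset.mem_filter, Finset.HasAntidiagonal.mem_antidiagonal] at h
    have : n - i = k := by omega
    simp [this]
  · rintro ⟨s, i⟩ h
    rfl

theorem cyD_add_replicate (c : Multiset ℕ) (k : ℕ) (hc : ∀ a ∈ c, 2 ≤ a) :
    cyD (c + Multiset.replicate k 1) = k.factorial * cyD c := by
  induction k with
  | zero => simp
  | succ k ih =>
    rw [Multiset.replicate_succ, Multiset.add_cons, cyD_cons, ih, Multiset.count_add,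
      Multiset.count_eq_zero_of_notMem (fun h => by have := hc 1 h; omega), Multiset.count_replicate_self,
      Nat.factorial_succ]
    ring

open Classical in
theorem perm_class (n : ℕ) (s : Multiset ℕ) (h0 : ∀ i ∈ s, 0 < i) (hs : s.sum = n) :
    (((Finset.univ : Finset (Equiv.Perm (Fin n))).filter fun g => g.partition.parts = s).card : ℝ)
      = (n.factorial : ℝ) / (cyD s : ℝ) := by
  set c := s.filter (fun i => 2 ≤ i) with hc
  have hc2 : ∀ a ∈ c, 2 ≤ a := fun a ha => (Multiset.mem_filter.1 ha).2
  obtain ⟨k, hk⟩ : ∃ k, s = c + Multiset.replicate k 1 := by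
    refine ⟨(s.filter fun i => ¬ 2 ≤ i).card, ?_⟩
    conv_lhs => rw [← Multiset.filter_add_not (fun i => 2 ≤ i) s]
    congr 1
    rw [Multiset.eq_replicate_card]
    intro b hb
    rw [Multiset.mem_filter] at hb
    have := h0 b hb.1
    omega
  have hsum : c.sum + k = n := by
    rw [← hs]; conv_rhs => rw [hk]
    simp
  have e : ((Finset.univ : Finset (Equiv.Perm (Fin n))).filter fun g => g.partition.parts = s)
      = ((Finset.univ : Finset (Equiv.Perm (Fin n))).filter fun g => g.cycleType = c) := by
    ext g
    simp only [Finset.mem_filter, Finset.mem_univ, true_and]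
    constructor
    · intro h
      rw [hc, ← h, Equiv.Perm.filter_parts_partition_eq_cycleType]
    · intro h
      rw [Equiv.Perm.parts_partition, ← Equiv.Perm.sum_cycleType, h, Fintype.card_fin, hk]
      congr 2
      omega
  have := Equiv.Perm.card_of_cycleType_mul_eq (Fin n) c
  rw [if_pos ⟨by simp; omega, hc2⟩, Fintype.card_fin] at this
  have hD : cyD s = k.factorial * cyD c := by rw [← cyD_add_replicate c k hc2, ← hk]
  have hkn : n - c.sum = k := by omega
  rw [hkn] at this
  have hpos := cyD_pos h0
  rw [e, eq_div_iff (by positivity)]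
  rw [hD]; unfold cyD
  rw [← mul_assoc k.factorial]
  exact_mod_cast this

theorem permProb_eq_cyP (n m : ℕ) (hm : 1 ≤ m) : permProb n m = cyP m n := by
  classical
  unfold permProb cyP
  rw [div_eq_iff (by positivity), Finset.sum_mul]
  rw [Nat.card_eq_fintype_card, Fintype.card_subtype]
  have : ((Finset.univ : Finset (Equiv.Perm (Fin n))).filter fun σ => ∀ c ∈ σ.cycleType, c ≤ m).card
      = ∑ s ∈ cyT m n, ((Finset.univ : Finset (Equiv.Perm (Fin n))).filter fun g => g.partition.parts = s).card := by
    rw [Finset.card_eq_sum_card_fiberwise (f := fun g => g.partition.parts) (t := cyT m n)]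
    · refine Finset.sum_congr rfl fun s hs => ?_
      congr 1
      ext g
      simp only [Finset.mem_filter, Finset.mem_univ, true_and, and_iff_right_iff_imp]
      rintro rfl c hc
      rw [mem_cyT] at hs
      refine hs.2.1 c ?_
      rw [Equiv.Perm.parts_partition]
      exact Multiset.mem_add.2 (Or.inl hc)
    · intro g hg
      simp only [Finset.coe_filter, Finset.mem_univ, true_and, Set.mem_ofPred_eq] at hg
      show g.partition.parts ∈ (cyT m n : Set (Multiset ℕ))
      rw [Finset.mem_coe, mem_cyT]
      refine ⟨fun i hi => g.partition.parts_pos hi, ?_, ?_⟩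
      · intro i hi
        rw [Equiv.Perm.parts_partition] at hi
        rcases Multiset.mem_add.1 hi with h | h
        · exact hg i h
        · rw [Multiset.eq_of_mem_replicate h]; exact hm
      · rw [g.partition.parts_sum, Fintype.card_fin]
  rw [this]
  push_cast
  refine Finset.sum_congr rfl fun s hs => ?_
  rw [mem_cyT] at hs
  rw [perm_class n s hs.1 hs.2.2]
  ring

theorem ERec.nonneg {l c : ℕ → ℝ} (h : ERec l c) (hl : ∀ i, 0 ≤ l i) (hl0 : l 0 = 0) (n : ℕ) :
    0 ≤ c n := by
  rw [h.unique hl0 (eSol_rec hl0)]; exact eSol_nonneg hl n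

theorem ERec.partial_le {l c : ℕ → ℝ} (h : ERec l c) (hl : ∀ i, 0 ≤ l i) (hl0 : l 0 = 0)
    (N : ℕ) (y : ℝ) (hy : 0 ≤ y) :
    ∑ k ∈ Finset.range N, c k * y ^ k ≤ Real.exp (∑ j ∈ Finset.range N, l j * y ^ j / j) := by
  have hc := h.nonneg hl hl0
  set T : ℝ → ℝ := fun t => ∑ k ∈ Finset.range N, c k * t ^ k with hT
  set L : ℝ → ℝ := fun t => ∑ j ∈ Finset.range N, l j * t ^ j / j with hL
  set T' : ℝ → ℝ := fun t => ∑ k ∈ Finset.range N, c k * ((k : ℝ) * t ^ (k - 1)) with hT'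
  set L' : ℝ → ℝ := fun t => ∑ j ∈ Finset.range N, l j * ((j : ℝ) * t ^ (j - 1)) / j with hL'
  have dT : ∀ t, HasDerivAt T (T' t) t := fun t =>
    HasDerivAt.fun_sum fun k _ => (hasDerivAt_pow k t).const_mul (c k)
  have dL : ∀ t, HasDerivAt L (L' t) t := fun t =>
    HasDerivAt.fun_sum fun k _ => ((hasDerivAt_pow k t).const_mul (l k)).div_const _
  have dH : ∀ t, HasDerivAt (fun t => T t * Real.exp (-L t))
      (T' t * Real.exp (-L t) + T t * (Real.exp (-L t) * (-L' t))) t := fun t =>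
    (dT t).mul ((dL t).neg.exp)
  have key : ∀ t, 0 < t → T' t ≤ L' t * T t := by
    intro t ht
    have e1 : t * T' t = ∑ k ∈ Finset.range N, (k : ℝ) * c k * t ^ k := by
      rw [hT', Finset.mul_sum]
      refine Finset.sum_congr rfl fun k _ => ?_
      rcases k with _ | k
      · simp
      · simp only [Nat.add_sub_cancel]; ring
    have e2 : t * L' t = ∑ j ∈ Finset.range N, l j * t ^ j := by
      rw [hL', Finset.mul_sum]
      refine Finset.sum_congr rfl fun k _ => ?_
      rcases k with _ | k
      · simp [hl0]
      · have : ((k + 1 : ℕ) : ℝ) ≠ 0 := by positivity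
        simp only [Nat.add_sub_cancel]; field_simp; ring
    have e3 : t * T' t ≤ (t * L' t) * T t := by
      rw [e1, e2, hT]
      simp only
      rw [Finset.sum_mul_sum, ← Finset.sum_product']
      calc ∑ k ∈ Finset.range N, (k : ℝ) * c k * t ^ k
          = ∑ k ∈ Finset.range N, ∑ ij ∈ Finset.HasAntidiagonal.antidiagonal k,
              (l ij.1 * t ^ ij.1) * (c ij.2 * t ^ ij.2) := by
            refine Finset.sum_congr rfl fun k _ => ?_
            rw [h.2, Finset.sum_mul]
            refine Finset.sum_congr rfl fun ij hij => ?_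
            rw [Finset.HasAntidiagonal.mem_antidiagonal] at hij
            rw [← hij, pow_add]; ring
        _ = ∑ x ∈ (Finset.range N).sigma (fun k => Finset.HasAntidiagonal.antidiagonal k),
              (l x.2.1 * t ^ x.2.1) * (c x.2.2 * t ^ x.2.2) := by rw [Finset.sum_sigma]
        _ = ∑ p ∈ ((Finset.range N).sigma (fun k => Finset.HasAntidiagonal.antidiagonal k)).image
              (fun x => x.2), (l p.1 * t ^ p.1) * (c p.2 * t ^ p.2) := by
            rw [Finset.sum_image]
            rintro ⟨a, p⟩ ha ⟨b, p'⟩ hb hab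
            simp only [Finset.coe_sigma, Set.mem_sigma_iff, Finset.mem_coe,
              Finset.HasAntidiagonal.mem_antidiagonal] at ha hb hab
            subst hab
            have : a = b := by rw [← ha.2, ← hb.2]
            subst this; rfl
        _ ≤ _ := by
            refine Finset.sum_le_sum_of_subset_of_nonneg ?_ ?_
            · intro p hp
              simp only [Finset.mem_image, Finset.mem_sigma, Finset.mem_range,
                Finset.HasAntidiagonal.mem_antidiagonal, Finset.mem_product] at hp ⊢
              obtain ⟨x, ⟨h1, h2⟩, rfl⟩ := hp
              omega
            · intro p _ _
              exact mul_nonneg (mul_nonneg (hl _) (pow_nonneg ht.le _))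
                (mul_nonneg (hc _) (pow_nonneg ht.le _))
    have : t * T' t ≤ t * (L' t * T t) := by linarith
    exact le_of_mul_le_mul_left this ht
  have anti : AntitoneOn (fun t => T t * Real.exp (-L t)) (Set.Ici 0) := by
    refine antitoneOn_of_deriv_nonpos (convex_Ici 0)
      (fun t _ => (dH t).continuousAt.continuousWithinAt)
      (fun t _ => (dH t).differentiableAt.differentiableWithinAt) ?_
    intro t ht
    rw [interior_Ici] at ht
    rw [(dH t).deriv]
    have := key t ht
    have e : T' t * Real.exp (-L t) + T t * (Real.exp (-L t) * (-L' t))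
      = (T' t - L' t * T t) * Real.exp (-L t) := by ring
    rw [e]
    exact mul_nonpos_of_nonpos_of_nonneg (by linarith) (Real.exp_pos _).le
  have h0 := anti (Set.mem_Ici.2 le_rfl) (Set.mem_Ici.2 hy) hy
  simp only at h0
  have hT0 : T 0 ≤ 1 := by
    rw [hT]; simp only
    rcases N with _ | N
    · simp
    · rw [Finset.sum_range_succ']
      simp [h.1]
  have hL0 : L 0 = 0 := by
    rw [hL]; simp only
    refine Finset.sum_eq_zero fun j _ => ?_
    rcases j with _ | j <;> simp
  rw [hL0, neg_zero, Real.exp_zero, mul_one, Real.exp_neg] at h0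
  have : T y * (Real.exp (L y))⁻¹ ≤ 1 := h0.trans hT0
  rwa [← div_eq_mul_inv, div_le_one (Real.exp_pos _)] at this

theorem ERec.hasSum {l c : ℕ → ℝ} (h : ERec l c) (hl : ∀ i, 0 ≤ l i) (hl0 : l 0 = 0)
    (q : ℝ) (hs : ∀ y : ℝ, 0 ≤ y → y < q → Summable fun j => l j * y ^ j)
    (y : ℝ) (hy : 0 ≤ y) (hyq : y < q) :
    HasSum (fun k => c k * y ^ k) (Real.exp (∑' j, l j * y ^ j / j)) := by
  have hc := h.nonneg hl hl0
  have hs2 : ∀ y : ℝ, 0 ≤ y → y < q → Summable fun j => l j * y ^ j / j := by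
    intro y hy hyq
    refine Summable.of_nonneg_of_le (fun j => ?_) (fun j => ?_) (hs y hy hyq)
    · exact div_nonneg (mul_nonneg (hl _) (pow_nonneg hy _)) (by positivity)
    · rcases j with _ | j
      · simp [hl0]
      · refine div_le_self (mul_nonneg (hl _) (pow_nonneg hy _)) ?_
        push_cast; linarith [(Nat.cast_nonneg j : (0:ℝ) ≤ j)]
  have hs3 : ∀ y : ℝ, 0 ≤ y → y < q → Summable fun j => c j * y ^ j := by
    intro y hy hyq
    refine summable_of_sum_range_le (c := Real.exp (∑' j, l j * y ^ j / j)) (fun j => mul_nonneg (hc _) (pow_nonneg hy _)) ?_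
    intro N
    refine (h.partial_le hl hl0 N y hy).trans (Real.exp_le_exp.2 ?_)
    exact (hs2 y hy hyq).sum_le_tsum _ fun j _ =>
      div_nonneg (mul_nonneg (hl _) (pow_nonneg hy _)) (by positivity)
  have nrm : ∀ (a : ℕ → ℝ), (∀ i, 0 ≤ a i) → ∀ t : ℝ, 0 ≤ t → Summable (fun j => a j * t ^ j) →
      Summable (fun j => ‖a j * t ^ j‖) := by
    intro a ha t ht hsum
    refine hsum.congr fun j => ?_
    rw [Real.norm_of_nonneg (mul_nonneg (ha _) (pow_nonneg ht _))]
  have conv : ∀ t : ℝ, ∀ k : ℕ, (k : ℝ) * c k * t ^ k = ∑ ij ∈ Finset.HasAntidiagonal.antidiagonal k,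
              (l ij.1 * t ^ ij.1) * (c ij.2 * t ^ ij.2) := by
    intro t k
    rw [h.2, Finset.sum_mul]
    refine Finset.sum_congr rfl fun ij hij => ?_
    rw [Finset.HasAntidiagonal.mem_antidiagonal] at hij
    rw [← hij, pow_add]; ring
  have hs4 : ∀ y : ℝ, 0 ≤ y → y < q → Summable fun k : ℕ => (k : ℝ) * c k * y ^ k := by
    intro y hy hyq
    have := summable_norm_sum_mul_antidiagonal_of_summable_norm (nrm l hl y hy (hs y hy hyq))
      (nrm c hc y hy (hs3 y hy hyq))
    exact this.of_norm.congr fun k => (conv y k).symm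
  have ht4 : ∀ y : ℝ, 0 ≤ y → y < q → ∑' k : ℕ, (k : ℝ) * c k * y ^ k
      = (∑' j, l j * y ^ j) * (∑' k, c k * y ^ k) := by
    intro y hy hyq
    rw [tsum_mul_tsum_eq_tsum_sum_antidiagonal_of_summable_norm (nrm l hl y hy (hs y hy hyq))
      (nrm c hc y hy (hs3 y hy hyq))]
    exact tsum_congr fun k => conv y k
  obtain ⟨z, hyz, hzq⟩ := exists_between hyq
  have hz : 0 < z := hy.trans_lt hyz
  set G : ℝ → ℝ := fun t => ∑' k, c k * t ^ k with hG
  set L : ℝ → ℝ := fun t => ∑' j, l j * t ^ j / j with hL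
  have pw : ∀ t ∈ Set.Ioo (-z) z, ∀ k : ℕ, |t| ^ k ≤ z ^ k := by
    intro t ht k
    exact pow_le_pow_left₀ (abs_nonneg _) (abs_lt.2 ht).le _
  have m0 : (0:ℝ) ∈ Set.Ioo (-z) z := ⟨by linarith, hz⟩
  have dG : ∀ t ∈ Set.Ioo (-z) z, HasDerivAt G (∑' k : ℕ, c k * ((k : ℝ) * t ^ (k - 1))) t := by
    intro t ht
    refine hasDerivAt_tsum_of_isPreconnected (u := fun k : ℕ => z⁻¹ * ((k : ℝ) * c k * z ^ k))
      (g := fun k t => c k * t ^ k) (g' := fun k t => c k * ((k : ℝ) * t ^ (k - 1)))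
      ((hs4 z hz.le hzq).mul_left _) isOpen_Ioo isPreconnected_Ioo ?_ ?_ m0 ?_ ht
    · intro k t _; exact (hasDerivAt_pow k t).const_mul (c k)
    · intro k t ht
      rw [norm_mul, norm_mul, norm_pow, Real.norm_of_nonneg (hc k), Real.norm_natCast, Real.norm_eq_abs]
      rcases k with _ | k
      · simp
      · rw [pow_succ z k]
        have := pw t ht k
        have h1 : z⁻¹ * (((k+1:ℕ):ℝ) * c (k+1) * (z ^ k * z)) = c (k+1) * (((k+1:ℕ):ℝ) * z ^ k) := by
          field_simp
        rw [h1]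
        simp only [Nat.add_sub_cancel]
        have := hc (k+1)
        gcongr
    · exact hs3 0 le_rfl (by linarith)
  have dL : ∀ t ∈ Set.Ioo (-z) z, HasDerivAt L (∑' k : ℕ, l k * ((k : ℝ) * t ^ (k - 1)) / k) t := by
    intro t ht
    refine hasDerivAt_tsum_of_isPreconnected (u := fun k : ℕ => z⁻¹ * (l k * z ^ k))
      (g := fun k t => l k * t ^ k / k) (g' := fun k t => l k * ((k : ℝ) * t ^ (k - 1)) / k)
      ((hs z hz.le hzq).mul_left _) isOpen_Ioo isPreconnected_Ioo ?_ ?_ m0 ?_ ht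
    · intro k t _; exact ((hasDerivAt_pow k t).const_mul (l k)).div_const _
    · intro k t ht
      rcases k with _ | k
      · simp [hl0]
      · have hk : ((k + 1 : ℕ) : ℝ) ≠ 0 := by positivity
        have e1 : l (k+1) * (((k+1:ℕ) : ℝ) * t ^ (k + 1 - 1)) / ((k+1:ℕ):ℝ) = l (k+1) * t ^ k := by
          simp only [Nat.add_sub_cancel]; field_simp
        rw [e1, norm_mul, norm_pow, Real.norm_of_nonneg (hl _), Real.norm_eq_abs]
        have e2 : z⁻¹ * (l (k+1) * z ^ (k+1)) = l (k+1) * z ^ k := by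
          rw [pow_succ]; field_simp
        rw [e2]
        have := pw t ht k
        have := hl (k+1)
        gcongr
    · exact hs2 0 le_rfl (by linarith)
  have sub : Set.Icc 0 y ⊆ Set.Ioo (-z) z := fun t ht => ⟨by linarith [ht.1], by linarith [ht.2]⟩
  have dH : ∀ t ∈ Set.Ioo (-z) z, HasDerivAt (fun t => G t * Real.exp (-L t))
      ((∑' k : ℕ, c k * ((k : ℝ) * t ^ (k - 1))) * Real.exp (-L t) +
        G t * (Real.exp (-L t) * (-(∑' k : ℕ, l k * ((k : ℝ) * t ^ (k - 1)) / k)))) t := fun t ht =>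
    (dG t ht).mul ((dL t ht).neg.exp)
  have zer : ∀ t ∈ Set.Ioo 0 y, HasDerivAt (fun t => G t * Real.exp (-L t)) 0 t := by
    intro t ht
    have ht' := sub ⟨ht.1.le, ht.2.le⟩
    have htq : t < q := by linarith [ht.2]
    convert! dH t ht' using 1
    have e1 : t * ∑' k : ℕ, c k * ((k : ℝ) * t ^ (k - 1)) = ∑' k : ℕ, (k : ℝ) * c k * t ^ k := by
      rw [← tsum_mul_left]
      refine tsum_congr fun k => ?_
      rcases k with _ | k
      · simp
      · simp only [Nat.add_sub_cancel]; ring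
    have e2 : t * ∑' k : ℕ, l k * ((k : ℝ) * t ^ (k - 1)) / k = ∑' j, l j * t ^ j := by
      rw [← tsum_mul_left]
      refine tsum_congr fun k => ?_
      rcases k with _ | k
      · simp [hl0]
      · have : ((k + 1 : ℕ) : ℝ) ≠ 0 := by positivity
        simp only [Nat.add_sub_cancel]; field_simp; ring
    have e3 := ht4 t ht.1.le htq
    rw [← e1, ← e2] at e3
    have e4 : (∑' k : ℕ, c k * ((k : ℝ) * t ^ (k - 1)))
        = (∑' k : ℕ, l k * ((k : ℝ) * t ^ (k - 1)) / k) * G t :=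
      mul_left_cancel₀ ht.1.ne' (by rw [e3]; ring)
    rw [e4]; ring
  have G0 : G 0 = 1 := by
    rw [hG]; simp only
    rw [tsum_eq_single 0 (fun k hk => by simp [hk])]
    simp [h.1]
  have L0 : L 0 = 0 := by
    rw [hL]; simp only
    have : ∀ j : ℕ, l j * (0:ℝ) ^ j / j = 0 := by
      intro j; rcases j with _ | j <;> simp
    simp [this]
  have fin : G y * Real.exp (-L y) = 1 := by
    rcases hy.eq_or_lt with h0 | h0
    · rw [← h0, G0, L0]; simp
    · obtain ⟨t, _, ht⟩ := exists_hasDerivAt_eq_slope (fun t => G t * Real.exp (-L t)) (fun _ => 0) h0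
        (fun t ht => (dH t (sub ht)).continuousAt.continuousWithinAt) zer
      rw [eq_div_iff (by linarith), zero_mul] at ht
      simp only [G0, L0, neg_zero, Real.exp_zero] at ht
      linarith
  have : G y = Real.exp (L y) := by
    rw [Real.exp_neg] at fin
    field_simp at fin
    exact fin
  rw [← this]
  exact (hs3 y hy hyq).hasSum

section PolyCount

open Polynomial UniqueFactorizationMonoid

variable (F : Type) [Field F] [Fintype F]

theorem finite_natDegree_le (m : ℕ) : {p : F[X] | p.natDegree ≤ m}.Finite := by
  have h : Finite (degreeLT F (m + 1)) := Finite.of_equiv _ (degreeLTEquiv F (m + 1)).symm.toEquiv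
  refine Set.Finite.subset (s := ((degreeLT F (m + 1) : Submodule F F[X]) : Set F[X])) (Set.toFinite _) ?_
  intro p hp
  rw [SetLike.mem_coe, mem_degreeLT]
  refine lt_of_le_of_lt degree_le_natDegree ?_
  have : p.natDegree < m + 1 := Nat.lt_succ_of_le hp
  exact_mod_cast this

theorem finite_irr (m : ℕ) :
    {p : F[X] | p.Monic ∧ Irreducible p ∧ p.natDegree ≤ m}.Finite :=
  (finite_natDegree_le F m).subset fun _ h => h.2.2

/-- monic irreducibles of degree at most `m` -/
noncomputable def irrF (m : ℕ) : Finset F[X] := (finite_irr F m).toFinset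

theorem mem_irrF {m : ℕ} {p : F[X]} : p ∈ irrF F m ↔ p.Monic ∧ Irreducible p ∧ p.natDegree ≤ m := by
  simp [irrF]

theorem finite_fri (m n : ℕ) :
    {f : F[X] | f.Monic ∧ f.natDegree = n ∧
      ∀ p : F[X], p.Monic → Irreducible p → p ∣ f → p.natDegree ≤ m}.Finite :=
  (finite_natDegree_le F n).subset fun _ h => h.2.1.le

/-- friable monics of degree `n` -/
noncomputable def friF (m n : ℕ) : Finset F[X] := (finite_fri F m n).toFinset

theorem mem_friF {m n : ℕ} {f : F[X]} : f ∈ friF F m n ↔ f.Monic ∧ f.natDegree = n ∧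
      ∀ p : F[X], p.Monic → Irreducible p → p ∣ f → p.natDegree ≤ m := by
  simp [friF]

theorem polyProb_eq (m n : ℕ) : polyProb F n m = ((friF F m n).card : ℝ) / (Fintype.card F : ℝ) ^ n := by
  unfold polyProb
  congr 2
  rw [friF, ← Set.ncard_eq_toFinset_card _ (finite_fri F m n)]
  rfl

open Classical in
theorem card_friF_dvd (m n k : ℕ) (P : F[X]) (hP : P ∈ irrF F m) (hk : k * P.natDegree ≤ n) :
    ((friF F m n).filter fun f => P ^ k ∣ f).card = (friF F m (n - k * P.natDegree)).card := by
  rw [mem_irrF] at hP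
  obtain ⟨h1, h2, h3⟩ := hP
  symm
  refine Finset.card_bij (fun g _ => P ^ k * g) ?_ ?_ ?_
  · intro g hg
    rw [mem_friF] at hg
    rw [Finset.mem_filter, mem_friF]
    refine ⟨⟨(h1.pow k).mul hg.1, ?_, ?_⟩, dvd_mul_right _ _⟩
    · rw [(h1.pow k).natDegree_mul hg.1, h1.natDegree_pow, hg.2.1]; omega
    · intro p hp hp' hd
      rcases hp'.prime.dvd_or_dvd hd with h | h
      · exact (natDegree_le_of_dvd (hp'.prime.dvd_of_dvd_pow h) h1.ne_zero).trans h3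
      · exact hg.2.2 p hp hp' h
  · intro g _ g' _ h
    exact mul_left_cancel₀ (h1.pow k).ne_zero h
  · intro f hf
    rw [Finset.mem_filter, mem_friF] at hf
    obtain ⟨⟨f1, f2, f3⟩, g, rfl⟩ := hf
    have hg : g.Monic := (h1.pow k).of_mul_monic_left f1
    refine ⟨g, ?_, rfl⟩
    rw [mem_friF]
    refine ⟨hg, ?_, fun p hp hp' hd => f3 p hp hp' (hd.mul_left _)⟩
    rw [(h1.pow k).natDegree_mul hg, h1.natDegree_pow] at f2
    omega

open Classical in
theorem pow_dvd_iff_count (P f : F[X]) (h1 : P.Monic) (h2 : Irreducible P) (hf : f ≠ 0) (k : ℕ) :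
    P ^ k ∣ f ↔ k ≤ (normalizedFactors f).count P := by
  have := emultiplicity_eq_count_normalizedFactors h2 hf
  rw [h1.normalize_eq_self] at this
  rw [pow_dvd_iff_le_emultiplicity, this]
  exact_mod_cast Iff.rfl

open Classical in
theorem natDegree_eq_sum (m n : ℕ) (f : F[X]) (hf : f ∈ friF F m n) :
    n = ∑ P ∈ irrF F m, (normalizedFactors f).count P * P.natDegree := by
  rw [mem_friF] at hf
  obtain ⟨f1, f2, f3⟩ := hf
  have hmon : ∀ g ∈ normalizedFactors f, g.Monic := by
    intro g hg
    have h := normalize_normalized_factor g hg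
    rw [← h]
    exact monic_normalize (irreducible_of_normalized_factor g hg).ne_zero
  have e : (normalizedFactors f).prod = f := by
    rw [prod_normalizedFactors_eq f1.ne_zero, f1.normalize_eq_self]
  have e2 : n = ((normalizedFactors f).map natDegree).sum := by
    rw [← f2]
    conv_lhs => rw [← e]
    exact natDegree_multiset_prod_of_monic _ hmon
  rw [e2, Finset.sum_multiset_map_count]
  simp only [smul_eq_mul]
  refine Finset.sum_subset ?_ ?_
  · intro g hg
    rw [Multiset.mem_toFinset] at hg
    rw [mem_irrF]
    exact ⟨hmon g hg, irreducible_of_normalized_factor g hg,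
      f3 g (hmon g hg) (irreducible_of_normalized_factor g hg) (dvd_of_mem_normalizedFactors hg)⟩
  · intro g _ hg
    rw [Multiset.mem_toFinset] at hg
    rw [Multiset.count_eq_zero_of_notMem hg, zero_mul]

open Classical in
/-- `∑_{deg P ∣ j, deg P ≤ m} deg P` -/
noncomputable def Lc (m j : ℕ) : ℕ :=
  if j = 0 then 0 else ∑ P ∈ (irrF F m).filter fun P => P.natDegree ∣ j, P.natDegree

open Classical in
theorem count_eq_card (m n : ℕ) (f P : F[X]) (hf : f ∈ friF F m n) (hP : P ∈ irrF F m) :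
    (normalizedFactors f).count P =
      ((Finset.Icc 1 n).filter fun j => P.natDegree ∣ j ∧ P ^ (j / P.natDegree) ∣ f).card := by
  rw [mem_friF] at hf
  rw [mem_irrF] at hP
  have hd : 0 < P.natDegree := hP.2.1.natDegree_pos
  set v := (normalizedFactors f).count P with hv
  have key := pow_dvd_iff_count F P f hP.1 hP.2.1 hf.1.ne_zero
  have hvn : v * P.natDegree ≤ n := by
    have := (key v).2 le_rfl
    have := natDegree_le_of_dvd this hf.1.ne_zero
    rwa [hP.1.natDegree_pow, hf.2.1] at this
  have : ((Finset.Icc 1 n).filter fun j => P.natDegree ∣ j ∧ P ^ (j / P.natDegree) ∣ f)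
      = (Finset.Icc 1 v).image (fun k => k * P.natDegree) := by
    ext j
    simp only [Finset.mem_filter, Finset.mem_Icc, Finset.mem_image]
    constructor
    · rintro ⟨⟨a, b⟩, ⟨k, rfl⟩, c⟩
      rw [Nat.mul_div_cancel_left _ hd] at c
      refine ⟨k, ⟨?_, (key k).1 c⟩, mul_comm _ _⟩
      rcases Nat.eq_zero_or_pos k with rfl | h
      · simp at a
      · exact h
    · rintro ⟨k, ⟨a, b⟩, rfl⟩
      refine ⟨⟨Nat.mul_pos a hd, le_trans (Nat.mul_le_mul_right _ b) hvn⟩, Dvd.intro_left _ rfl, ?_⟩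
      rw [Nat.mul_div_cancel _ hd]
      exact (key k).2 b
  rw [this, Finset.card_image_of_injective]
  · simp
  · intro a b h
    exact Nat.eq_of_mul_eq_mul_right hd h

open Classical in
theorem card_friF_rec (m n : ℕ) :
    n * (friF F m n).card = ∑ j ∈ Finset.Icc 1 n, Lc F m j * (friF F m (n - j)).card := by
  have h1 : n * (friF F m n).card = ∑ f ∈ friF F m n, ∑ P ∈ irrF F m,
      (∑ j ∈ Finset.Icc 1 n, if P.natDegree ∣ j ∧ P ^ (j / P.natDegree) ∣ f then P.natDegree else 0) := by
    rw [mul_comm, ← smul_eq_mul, ← Finset.sum_const]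
    refine Finset.sum_congr rfl fun f hf => ?_
    rw [natDegree_eq_sum F m n f hf]
    refine Finset.sum_congr rfl fun P hP => ?_
    rw [← natDegree_eq_sum F m n f hf, count_eq_card F m n f P hf hP, ← Finset.sum_filter, Finset.sum_const, smul_eq_mul]
  rw [h1, Finset.sum_comm]
  have h2 : ∀ P ∈ irrF F m, ∑ f ∈ friF F m n, (∑ j ∈ Finset.Icc 1 n,
      if P.natDegree ∣ j ∧ P ^ (j / P.natDegree) ∣ f then P.natDegree else 0)
      = ∑ j ∈ Finset.Icc 1 n, if P.natDegree ∣ j then P.natDegree * (friF F m (n - j)).card else 0 := by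
    intro P hP
    rw [Finset.sum_comm]
    refine Finset.sum_congr rfl fun j hj => ?_
    rw [Finset.mem_Icc] at hj
    split_ifs with hd
    · simp only [hd, true_and]
      rw [← Finset.sum_filter, Finset.sum_const, smul_eq_mul, mul_comm]
      have hjd : j / P.natDegree * P.natDegree = j := Nat.div_mul_cancel hd
      rw [card_friF_dvd F m n _ P hP (by omega), hjd]
    · simp [hd]
  rw [Finset.sum_congr rfl h2, Finset.sum_comm]
  refine Finset.sum_congr rfl fun j hj => ?_
  rw [Finset.mem_Icc] at hj
  rw [Lc, if_neg (by omega), Finset.sum_filter, Finset.sum_mul]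
  refine Finset.sum_congr rfl fun P _ => ?_
  split_ifs <;> simp

theorem card_friF_small (m n : ℕ) (h : n ≤ m) : (friF F m n).card = Fintype.card F ^ n := by
  have e : (friF F m n : Set F[X]) = {p : F[X] | p.Monic ∧ p.natDegree = n} := by
    ext f
    rw [Finset.mem_coe, mem_friF]
    constructor
    · rintro ⟨a, b, _⟩; exact ⟨a, b⟩
    · rintro ⟨a, b⟩
      refine ⟨a, b, fun p hp hp' hd => ?_⟩
      have := natDegree_le_of_dvd hd a.ne_zero
      omega
  rw [← Set.ncard_coe_finset, e]
  rw [← Nat.card_coe_set_eq]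
  have e2 : Nat.card {p : F[X] // p.Monic ∧ p.natDegree = n} = Nat.card (degreeLT F n) :=
    Nat.card_congr (monicEquivDegreeLT n)
  refine e2.trans ?_
  rw [Nat.card_congr (degreeLTEquiv F n).toEquiv]
  simp

theorem card_pos' : (0 : ℝ) < (Fintype.card F : ℝ) := by
  have := Fintype.card_pos (α := F)
  positivity

/-- normalised coefficients -/
noncomputable def lc (m j : ℕ) : ℝ := (Lc F m j : ℝ) / (Fintype.card F : ℝ) ^ j

theorem lc_zero (m : ℕ) : lc F m 0 = 0 := by simp [lc, Lc]

theorem lc_nonneg (m j : ℕ) : 0 ≤ lc F m j := by unfold lc; positivity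

theorem polyProb_rec (m : ℕ) : ERec (lc F m) (fun n => polyProb F n m) := by
  have hq := card_pos' F
  constructor
  · simp only [polyProb_eq, card_friF_small F m 0 (Nat.zero_le _)]; simp
  · intro n
    simp only [polyProb_eq]
    rw [Finset.Nat.sum_antidiagonal_eq_sum_range_succ_mk, Finset.sum_range_succ']
    simp only [lc_zero, zero_mul, add_zero]
    have h := card_friF_rec F m n
    have h' : (n : ℝ) * ((friF F m n).card : ℝ) = ∑ j ∈ Finset.Icc 1 n, (Lc F m j : ℝ) * ((friF F m (n - j)).card : ℝ) := by
      exact_mod_cast h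
    rw [← mul_div_assoc, h', Finset.sum_div]
    rw [Finset.range_eq_Ico, Finset.sum_Ico_add' (fun k => lc F m k * (((friF F m (n - k)).card : ℝ) / (Fintype.card F : ℝ) ^ (n - k))) 0 n 1]
    have : Finset.Ico (0 + 1) (n + 1) = Finset.Icc 1 n := by ext; simp
    rw [this]
    refine Finset.sum_congr rfl fun j hj => ?_
    rw [Finset.mem_Icc] at hj
    unfold lc
    rw [div_mul_div_comm, ← pow_add, Nat.add_sub_cancel' hj.2]

theorem lc_small (m j : ℕ) (h1 : 1 ≤ j) (hj : j ≤ m) : lc F m j = 1 := by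
  have hq := card_pos' F
  have key : ∀ n ≤ m, ∑ j ∈ Finset.Icc 1 n, lc F m j = n := by
    intro n hn
    have h := card_friF_rec F m n
    have h' : (n : ℝ) * ((friF F m n).card : ℝ) = ∑ j ∈ Finset.Icc 1 n, (Lc F m j : ℝ) * ((friF F m (n - j)).card : ℝ) := by
      exact_mod_cast h
    rw [card_friF_small F m n hn] at h'
    have : ∑ j ∈ Finset.Icc 1 n, (Lc F m j : ℝ) * ((friF F m (n - j)).card : ℝ)
        = (∑ j ∈ Finset.Icc 1 n, lc F m j) * (Fintype.card F : ℝ) ^ n := by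
      rw [Finset.sum_mul]
      refine Finset.sum_congr rfl fun j hj => ?_
      rw [Finset.mem_Icc] at hj
      rw [card_friF_small F m (n - j) (by omega)]
      unfold lc
      rw [div_mul_eq_mul_div, eq_div_iff (by positivity)]
      push_cast
      rw [mul_assoc, ← pow_add, Nat.sub_add_cancel hj.2]
    rw [this] at h'
    push_cast at h'
    exact (mul_right_cancel₀ (by positivity) h').symm
  obtain ⟨i, rfl⟩ : ∃ i, j = i + 1 := ⟨j - 1, by omega⟩
  have a := key (i + 1) hj
  have b := key i (by omega)
  rw [Finset.sum_Icc_succ_top (by omega), b] at a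
  push_cast at a
  linarith

theorem Lc_small (m j : ℕ) (h1 : 1 ≤ j) (hj : j ≤ m) : Lc F m j = Fintype.card F ^ j := by
  have hq := card_pos' F
  have := lc_small F m j h1 hj
  unfold lc at this
  rw [div_eq_one_iff_eq (by positivity)] at this
  exact_mod_cast this

theorem Lc_two_mul (m : ℕ) (hm : 1 ≤ m) : Fintype.card F ^ m ≤ Lc F m (2 * m) := by
  rw [← Lc_small F m m hm le_rfl]
  unfold Lc
  rw [if_neg (by omega), if_neg (by omega)]
  refine Finset.sum_le_sum_of_subset ?_
  intro P hP
  rw [Finset.mem_filter] at hP ⊢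
  exact ⟨hP.1, hP.2.mul_left 2⟩

theorem card_two_le : 2 ≤ Fintype.card F := Fintype.one_lt_card

theorem Lc_le (m j : ℕ) (hj : m < j) : Lc F m j ≤ 2 * Fintype.card F ^ (min m (j / 2)) := by
  classical
  have h2 := card_two_le F
  set M := min m (j / 2) with hM
  have h1 : Lc F m j ≤ ∑ d ∈ Finset.Icc 1 M, Fintype.card F ^ d := by
    unfold Lc
    rw [if_neg (by omega)]
    have maps : ∀ P ∈ (irrF F m).filter (fun P => P.natDegree ∣ j), P.natDegree ∈ Finset.Icc 1 M := by
      intro P hP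
      rw [Finset.mem_filter, mem_irrF] at hP
      obtain ⟨⟨a, b, c⟩, k, hk⟩ := hP
      have hd : 0 < P.natDegree := b.natDegree_pos
      rw [Finset.mem_Icc, hM]
      refine ⟨hd, le_min c ?_⟩
      rw [Nat.le_div_iff_mul_le (by norm_num), hk]
      refine Nat.mul_le_mul_left _ ?_
      by_contra hlt
      have : k = 0 ∨ k = 1 := by omega
      rcases this with rfl | rfl <;> omega
    rw [← Finset.sum_fiberwise_of_maps_to maps]
    refine Finset.sum_le_sum fun d hd => ?_
    rw [Finset.mem_Icc] at hd
    rw [← Lc_small F m d hd.1 (by omega)]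
    unfold Lc
    rw [if_neg (by omega)]
    refine Finset.sum_le_sum_of_subset ?_
    intro P hP
    simp only [Finset.mem_filter] at hP ⊢
    exact ⟨hP.1.1, by rw [hP.2]⟩
  refine h1.trans ?_
  clear_value M
  clear h1 hM
  induction M with
  | zero => simp
  | succ M ih =>
    rw [Finset.sum_Icc_succ_top (by omega), pow_succ]
    nlinarith [pow_pos (show 0 < Fintype.card F by omega) M]

end PolyCount

section GqFormula

open Polynomial

variable (F : Type) [Field F] [Fintype F]

theorem hasSum_log_term (d : ℕ) (hd : 1 ≤ d) (w : ℝ) (h0 : 0 ≤ w) (h1 : w < 1) :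
    HasSum (fun j : ℕ => if d ∣ j then (d : ℝ) * w ^ j / j else 0) (-Real.log (1 - w ^ d)) := by
  have hw : |w ^ d| < 1 := by
    rw [abs_of_nonneg (pow_nonneg h0 _)]
    exact pow_lt_one₀ h0 h1 (by omega)
  have h := Real.hasSum_pow_div_log_of_abs_lt_one hw
  have inj : Function.Injective (fun k : ℕ => d * (k + 1)) := by
    intro a b hab
    have := Nat.eq_of_mul_eq_mul_left (by omega) hab
    omega
  rw [← inj.hasSum_iff]
  · convert! h using 1
    funext k
    have : (d : ℝ) ≠ 0 := by positivity
    simp only [Function.comp, dvd_mul_right, if_true]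
    push_cast
    rw [pow_mul]
    field_simp
  · intro j hj
    split_ifs with hdj
    · obtain ⟨k, rfl⟩ := hdj
      rcases k with _ | k
      · simp
      · exact absurd ⟨k, rfl⟩ hj
    · rfl

theorem hasSum_log_Fq (m : ℕ) (y : ℝ) (hy : 0 ≤ y) (hyq : y < (Fintype.card F : ℝ)) :
    0 < FqFun F m y ∧ HasSum (fun j : ℕ => lc F m j * y ^ j / j) (Real.log (FqFun F m y)) := by
  classical
  have hq := card_pos' F
  set w := y / (Fintype.card F : ℝ) with hw
  have w0 : 0 ≤ w := by positivity
  have w1 : w < 1 := (div_lt_one hq).2 hyq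
  have e : FqFun F m y = ∏ P ∈ irrF F m, (1 - w ^ P.natDegree)⁻¹ := by
    unfold FqFun
    rw [finprod_mem_eq_finite_toFinset_prod _ (finite_irr F m)]
    rfl
  have pos : ∀ P ∈ irrF F m, 0 < 1 - w ^ P.natDegree := by
    intro P hP
    rw [mem_irrF] at hP
    have := pow_lt_one₀ w0 w1 (hP.2.1.natDegree_pos).ne'
    linarith
  refine ⟨by rw [e]; exact Finset.prod_pos fun P hP => inv_pos.2 (pos P hP), ?_⟩
  rw [e, Real.log_prod (fun P hP => (inv_pos.2 (pos P hP)).ne')]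
  have h2 : HasSum (fun j : ℕ => ∑ P ∈ irrF F m, if P.natDegree ∣ j then (P.natDegree : ℝ) * w ^ j / j else 0)
      (∑ P ∈ irrF F m, Real.log (1 - w ^ P.natDegree)⁻¹) := by
    refine hasSum_sum fun P hP => ?_
    rw [Real.log_inv]
    rw [mem_irrF] at hP
    exact hasSum_log_term P.natDegree hP.2.1.natDegree_pos w w0 w1
  convert! h2 using 1
  funext j
  rcases Nat.eq_zero_or_pos j with rfl | hj
  · simp
  · unfold lc Lc
    rw [if_neg (by omega), ← Finset.sum_filter]
    push_cast
    rw [hw, div_pow, Finset.sum_div, Finset.sum_mul, Finset.sum_div]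
    refine Finset.sum_congr rfl fun P _ => ?_
    field_simp

/-- coefficients of `log G` -/
noncomputable def lg (m j : ℕ) : ℝ := if j ≤ m then 0 else lc F m j

theorem lg_zero (m : ℕ) : lg F m 0 = 0 := by simp [lg]

theorem lg_nonneg (m j : ℕ) : 0 ≤ lg F m j := by
  unfold lg; split_ifs
  · exact le_rfl
  · exact lc_nonneg F m j

theorem hasSum_lg (m : ℕ) (y : ℝ) (hy : 0 ≤ y) (hyq : y < (Fintype.card F : ℝ)) :
    HasSum (fun j : ℕ => lg F m j * y ^ j / j)
      (Real.log (FqFun F m y) - ∑ i ∈ Finset.Icc 1 m, y ^ i / (i : ℝ)) := by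
  have h := (hasSum_log_Fq F m y hy hyq).2
  have h2 : HasSum (fun j : ℕ => if j ∈ Finset.Icc 1 m then y ^ j / (j : ℝ) else 0)
      (∑ i ∈ Finset.Icc 1 m, y ^ i / (i : ℝ)) := by
    have := hasSum_sum_of_ne_finset_zero (L := SummationFilter.unconditional ℕ) (s := Finset.Icc 1 m)
      (f := fun j : ℕ => if j ∈ Finset.Icc 1 m then y ^ j / (j : ℝ) else 0) (fun j hj => if_neg hj)
    rwa [Finset.sum_congr rfl (fun j hj => if_pos hj)] at this
  convert! h.sub h2 using 1
  funext j
  unfold lg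
  rcases Nat.eq_zero_or_pos j with rfl | hj
  · simp
  · by_cases hjm : j ≤ m
    · rw [if_pos hjm, if_pos (Finset.mem_Icc.2 ⟨hj, hjm⟩), lc_small F m j hj hjm]; simp
    · rw [if_neg hjm, if_neg (fun h => hjm (Finset.mem_Icc.1 h).2)]; simp

theorem Gq_eq (m : ℕ) (y : ℝ) (hy : 0 ≤ y) (hyq : y < (Fintype.card F : ℝ)) :
    Gq F m y = Real.exp (∑' j : ℕ, lg F m j * y ^ j / j) := by
  rw [(hasSum_lg F m y hy hyq).tsum_eq, sub_eq_add_neg, Real.exp_add,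
    Real.exp_log (hasSum_log_Fq F m y hy hyq).1]
  rfl

theorem lg_le (m j : ℕ) : lg F m j ≤ 2 * (Fintype.card F : ℝ) ^ (min m (j / 2)) / (Fintype.card F : ℝ) ^ j := by
  have hq := card_pos' F
  unfold lg
  split_ifs with h
  · positivity
  · unfold lc
    have := Lc_le F m j (by omega)
    gcongr
    exact_mod_cast this

theorem one_lt_card' : (1 : ℝ) < (Fintype.card F : ℝ) := by
  have := card_two_le F
  exact_mod_cast this

theorem summable_lg (m : ℕ) (y : ℝ) (hy : 0 ≤ y) (hyq : y < (Fintype.card F : ℝ)) :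
    Summable (fun j : ℕ => lg F m j * y ^ j) := by
  have hq := card_pos' F
  have hq1 := one_lt_card' F
  have hg : Summable (fun j : ℕ => (2 * (Fintype.card F : ℝ) ^ m) * (y / Fintype.card F) ^ j) :=
    (summable_geometric_of_lt_one (by positivity) ((div_lt_one hq).2 hyq)).mul_left _
  refine Summable.of_nonneg_of_le (fun j => mul_nonneg (lg_nonneg F m j) (pow_nonneg hy _)) (fun j => ?_) hg
  have h1 := lg_le F m j
  have h2 : (Fintype.card F : ℝ) ^ (min m (j / 2)) ≤ (Fintype.card F : ℝ) ^ m :=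
    pow_le_pow_right₀ hq1.le (min_le_left _ _)
  calc lg F m j * y ^ j ≤ (2 * (Fintype.card F : ℝ) ^ (min m (j / 2)) / (Fintype.card F : ℝ) ^ j) * y ^ j := by
        gcongr
    _ ≤ (2 * (Fintype.card F : ℝ) ^ m / (Fintype.card F : ℝ) ^ j) * y ^ j := by gcongr
    _ = _ := by rw [div_pow]; ring

/-- coefficients of `G` -/
noncomputable def gc (m : ℕ) : ℕ → ℝ := eSol (lg F m)

theorem gc_nonneg (m k : ℕ) : 0 ≤ gc F m k := eSol_nonneg (lg_nonneg F m) k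

theorem hasSum_gc (m : ℕ) (y : ℝ) (hy : 0 ≤ y) (hyq : y < (Fintype.card F : ℝ)) :
    HasSum (fun k : ℕ => gc F m k * y ^ k) (Gq F m y) := by
  rw [Gq_eq F m y hy hyq]
  exact (eSol_rec (lg_zero F m)).hasSum (lg_nonneg F m) (lg_zero F m) _ (summable_lg F m) y hy hyq

theorem polyProb_conv (m n : ℕ) (hm : 1 ≤ m) : polyProb F n m =
    ∑ k ∈ Finset.range (n + 1), gc F m k * permProb (n - k) m := by
  have h1 := (eSol_rec (lg_zero F m)).mul (cyP_rec m)
  have h2 := polyProb_rec F m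
  have e : (fun n => lg F m n + if 1 ≤ n ∧ n ≤ m then 1 else 0) = lc F m := by
    funext j
    unfold lg
    rcases Nat.eq_zero_or_pos j with rfl | hj
    · simp [lc_zero]
    · by_cases hjm : j ≤ m
      · rw [if_pos hjm, if_pos ⟨hj, hjm⟩, lc_small F m j hj hjm]; simp
      · rw [if_neg hjm, if_neg (fun h => hjm h.2)]; simp
  rw [e] at h1
  have := congrFun (h2.unique (lc_zero F m) h1) n
  rw [this, Finset.Nat.sum_antidiagonal_eq_sum_range_succ_mk]
  refine Finset.sum_congr rfl fun k _ => ?_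
  rw [permProb_eq_cyP _ _ hm]; rfl

end GqFormula

theorem lc_shift (f : ℤ → ℝ) (n : ℤ) (m : ℕ) :
    ∑ i ∈ Finset.Icc 1 m, f (n + 1 - i) + f (n - m) = f n + ∑ i ∈ Finset.Icc 1 m, f (n - i) := by
  induction m with
  | zero => simp
  | succ m ih =>
    rw [Finset.sum_Icc_succ_top (by omega), Finset.sum_Icc_succ_top (by omega)]
    have : n + 1 - ((m + 1 : ℕ) : ℤ) = n - m := by push_cast; ring
    rw [this]
    linarith

/-- log-concavity of the solution of the recurrence, on `ℤ` -/
theorem logconc_int (P : ℤ → ℝ) (m : ℕ) (hneg : ∀ z : ℤ, z < 0 → P z = 0)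
    (hpos : ∀ z : ℤ, 0 ≤ z → 0 < P z)
    (hrec : ∀ n : ℕ, (n : ℝ) * P n = ∑ i ∈ Finset.Icc 1 m, P ((n : ℤ) - i)) (N : ℕ) :
    ∀ a b : ℤ, a ≤ b → b ≤ N → P (a - 1) * P b ≤ P a * P (b - 1) := by
  have hnn : ∀ z, 0 ≤ P z := fun z => by
    rcases lt_or_ge z 0 with h | h
    · rw [hneg z h]
    · exact (hpos z h).le
  induction N with
  | zero =>
    intro a b hab hb
    rw [hneg (a - 1) (by push_cast at hb; omega), zero_mul]
    exact mul_nonneg (hnn _) (hnn _)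
  | succ n ih =>
    -- adjacent case
    have adj : P ((n : ℤ) - 1) * P ((n : ℤ) + 1) ≤ P n * P n := by
      rcases Nat.eq_zero_or_pos n with rfl | hn
      · rw [hneg _ (by norm_num), zero_mul]; exact mul_nonneg (hnn _) (hnn _)
      have hn' : (0 : ℝ) < n := by exact_mod_cast hn
      have r1 := hrec (n + 1)
      have s1 := lc_shift P n m
      have r2 := hrec n
      have r3 : ((n : ℝ) - 1) * P ((n : ℤ) - 1) = ∑ i ∈ Finset.Icc 1 m, P ((n : ℤ) - 1 - i) := by
        have := hrec (n - 1)
        have e : ((n - 1 : ℕ) : ℤ) = (n : ℤ) - 1 := by omega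
        have e' : ((n - 1 : ℕ) : ℝ) = (n : ℝ) - 1 := by
          rw [Nat.cast_sub hn]; simp
        rw [e, e'] at this
        exact this
      have s2 := lc_shift P ((n : ℤ) - 1) m
      simp only [sub_add_cancel] at s2
      push_cast at r1
      -- brackets
      have br : ∑ i ∈ Finset.Icc 1 m, P ((n : ℤ) - m - 1) * P ((n : ℤ) - i)
          ≤ ∑ i ∈ Finset.Icc 1 m, P ((n : ℤ) - m) * P ((n : ℤ) - 1 - i) := by
        refine Finset.sum_le_sum fun i hi => ?_
        rw [Finset.mem_Icc] at hi
        have := ih ((n : ℤ) - m) ((n : ℤ) - i) (by omega) (by omega)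
        have e : (n : ℤ) - 1 - i = (n : ℤ) - i - 1 := by ring
        rw [e]; exact this
      rw [← Finset.mul_sum, ← Finset.mul_sum, ← r2, ← r3] at br
      have br2 := ih ((n : ℤ) - m) n (by omega) le_rfl
      have e1 : (n : ℤ) - 1 - m = (n : ℤ) - m - 1 := by ring
      rw [e1] at s2
      -- (n+1) P(n+1) = (n+1) P n - P(n-m)
      have t1 : ((n : ℝ) + 1) * P ((n : ℤ) + 1) = ((n : ℝ) + 1) * P n - P ((n : ℤ) - m) := by linarith
      have t2 : (n : ℝ) * P n = (n : ℝ) * P ((n : ℤ) - 1) - P ((n : ℤ) - m - 1) := by linarith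
      have key : (n : ℝ) * ((n : ℝ) + 1) * (P n * P n - P ((n : ℤ) - 1) * P ((n : ℤ) + 1))
          = (n : ℝ) * (P ((n : ℤ) - 1) * P ((n : ℤ) - m)) - ((n : ℝ) + 1) * (P n * P ((n : ℤ) - m - 1)) := by
        linear_combination (-(n : ℝ) * P ((n : ℤ) - 1)) * t1 + (((n : ℝ) + 1) * P n) * t2
      have : 0 ≤ (n : ℝ) * ((n : ℝ) + 1) * (P n * P n - P ((n : ℤ) - 1) * P ((n : ℤ) + 1)) := by
        rw [key]; linarith
      have := nonneg_of_mul_nonneg_right this (by positivity)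
      linarith
    intro a b hab hb
    rcases lt_or_ge b ((n : ℤ) + 1) with h | h
    · exact ih a b hab (by omega)
    · have hb' : b = (n : ℤ) + 1 := by push_cast at hb; omega
      subst hb'
      rw [add_sub_cancel_right]
      rcases eq_or_lt_of_le hab with rfl | hlt
      · rw [add_sub_cancel_right, mul_comm]
      have h1 := ih a n (by omega) le_rfl
      rcases lt_or_ge a 1 with ha | ha
      · rw [hneg (a - 1) (by omega), zero_mul]; exact mul_nonneg (hnn _) (hnn _)
      have p1 := hpos n (by omega)
      have p2 := hpos ((n : ℤ) - 1) (by omega)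
      have p3 := hpos ((n : ℤ) + 1) (by omega)
      have p4 := hpos a (by omega)
      have h2 := mul_le_mul h1 adj (mul_nonneg p2.le p3.le) (mul_nonneg p4.le p2.le)
      refine le_of_mul_le_mul_left (a := P n * P ((n : ℤ) - 1)) ?_ (mul_pos p1 p2)
      nlinarith

theorem perm_rec_sum (m : ℕ) (p : ℕ → ℝ) (h : ERec (fun i => if 1 ≤ i ∧ i ≤ m then 1 else 0) p) (n : ℕ) :
    (n : ℝ) * p n = ∑ i ∈ Finset.Icc 1 m, if i ≤ n then p (n - i) else 0 := by
  rw [h.2, Finset.Nat.sum_antidiagonal_eq_sum_range_succ_mk]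
  simp only [ite_mul, one_mul, zero_mul]
  rw [← Finset.sum_filter, ← Finset.sum_filter]
  refine Finset.sum_congr ?_ fun _ _ => rfl
  ext i
  simp only [Finset.mem_filter, Finset.mem_range, Finset.mem_Icc]
  omega

theorem logconc (m : ℕ) (hm : 1 ≤ m) (p : ℕ → ℝ) (h : ERec (fun i => if 1 ≤ i ∧ i ≤ m then 1 else 0) p)
    (a b : ℕ) (hab : a ≤ b) : p a * p (b + 1) ≤ p (a + 1) * p b := by
  have hp : ∀ n, 0 < p n := h.pos (fun i => by positivity) (by simp) (by simp [hm])
  have := logconc_int (fun z => if 0 ≤ z then p z.toNat else 0) m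
    (fun z hz => if_neg (by omega)) (fun z hz => by simp only [if_pos hz]; exact hp _)
    (fun n => by
      simp only [Int.natCast_nonneg, if_true, Int.toNat_natCast]
      rw [perm_rec_sum m p h]
      refine Finset.sum_congr rfl fun i _ => ?_
      by_cases hi : i ≤ n
      · rw [if_pos hi, if_pos (by omega)]
        congr 1; omega
      · rw [if_neg hi, if_neg (by omega)])
    (b + 1) ((a + 1 : ℕ) : ℤ) ((b + 1 : ℕ) : ℤ) (by omega) (by omega)
  have e : ∀ k : ℕ, ((k + 1 : ℕ) : ℤ) - 1 = (k : ℤ) := fun k => by push_cast; ring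
  simp only [e, Int.natCast_nonneg, if_true, Int.toNat_natCast] at this
  exact this

section Peak

variable {m : ℕ} (hm : 1 ≤ m) {p : ℕ → ℝ} (h : ERec (fun i => if 1 ≤ i ∧ i ≤ m then 1 else 0) p)

theorem p_pos (hm : 1 ≤ m) (h : ERec (fun i => if 1 ≤ i ∧ i ≤ m then 1 else 0) p) (n : ℕ) : 0 < p n :=
  h.pos (fun i => by positivity) (by simp) (by simp [hm]) n

theorem p_dec (hm : 1 ≤ m) (h : ERec (fun i => if 1 ≤ i ∧ i ≤ m then 1 else 0) p)
    (c N : ℕ) (hN : c ≤ N) (k : ℕ) : p (N + k) * (p c / p (c + 1)) ^ k ≤ p N := by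
  have hp := p_pos hm h
  induction k with
  | zero => simp
  | succ k ih =>
    refine le_trans ?_ ih
    rw [pow_succ', ← mul_assoc]
    have : p (N + (k + 1)) * (p c / p (c + 1)) ≤ p (N + k) := by
      rw [← mul_div_assoc, div_le_iff₀ (hp _)]
      have := logconc m hm p h c (N + k) (by omega)
      rw [← add_assoc]; linarith
    have : 0 ≤ (p c / p (c + 1)) ^ k := pow_nonneg (div_nonneg (hp _).le (hp _).le) _
    gcongr

theorem p_inc (hm : 1 ≤ m) (h : ERec (fun i => if 1 ≤ i ∧ i ≤ m then 1 else 0) p)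
    (c N k : ℕ) (hN : N + k ≤ c + 1) : p N ≤ p (N + k) * (p c / p (c + 1)) ^ k := by
  have hp := p_pos hm h
  induction k with
  | zero => simp
  | succ k ih =>
    refine (ih (by omega)).trans ?_
    rw [pow_succ', ← mul_assoc]
    have : p (N + k) ≤ p (N + (k + 1)) * (p c / p (c + 1)) := by
      rw [← mul_div_assoc, le_div_iff₀ (hp _)]
      have := logconc m hm p h (N + k) c (by omega)
      rw [← add_assoc]; linarith
    have : 0 ≤ (p c / p (c + 1)) ^ k := pow_nonneg (div_nonneg (hp _).le (hp _).le) _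
    gcongr

theorem p_peak (hm : 1 ≤ m) (h : ERec (fun i => if 1 ≤ i ∧ i ≤ m then 1 else 0) p)
    (c N : ℕ) : p N * (p c / p (c + 1)) ^ N ≤ p (c + 1) * (p c / p (c + 1)) ^ (c + 1) := by
  have hp := p_pos hm h
  have hy : 0 < p c / p (c + 1) := div_pos (hp _) (hp _)
  rcases le_total N (c + 1) with hN | hN
  · obtain ⟨k, hk⟩ := Nat.exists_eq_add_of_le hN
    have := p_inc hm h c N k (by omega)
    rw [hk, pow_add, ← hk]
    calc p N * (p c / p (c + 1)) ^ N ≤ (p (c + 1) * (p c / p (c + 1)) ^ k) * (p c / p (c + 1)) ^ N := by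
          rw [← hk] at this; gcongr
      _ = _ := by ring
  · obtain ⟨k, hk⟩ := Nat.exists_eq_add_of_le hN
    have := p_dec hm h c (c + 1) (by omega) k
    rw [hk, pow_add]
    calc p (c + 1 + k) * ((p c / p (c + 1)) ^ (c + 1) * (p c / p (c + 1)) ^ k)
        = (p (c + 1 + k) * (p c / p (c + 1)) ^ k) * (p c / p (c + 1)) ^ (c + 1) := by ring
      _ ≤ _ := by gcongr

theorem ratio_mono (hm : 1 ≤ m) (h : ERec (fun i => if 1 ≤ i ∧ i ≤ m then 1 else 0) p)
    (a b : ℕ) (hab : a ≤ b) : p a / p (a + 1) ≤ p b / p (b + 1) := by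
  have hp := p_pos hm h
  rw [div_le_div_iff₀ (hp _) (hp _)]
  have := logconc m hm p h a b hab
  linarith

theorem one_le_ratio (hm : 1 ≤ m) (h : ERec (fun i => if 1 ≤ i ∧ i ≤ m then 1 else 0) p)
    (a : ℕ) : 1 ≤ p a / p (a + 1) := by
  refine le_trans ?_ (ratio_mono hm h 0 a (Nat.zero_le _))
  have h1 : p 1 = 1 := by
    have := perm_rec_sum m p h 1
    rw [Finset.sum_eq_single 1] at this
    · simpa [h.1] using this
    · intro b hb hb1
      rw [Finset.mem_Icc] at hb
      rw [if_neg (by omega)]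
    · intro hh; exact absurd (Finset.mem_Icc.2 ⟨le_rfl, hm⟩) hh
  simp [h.1, h1]

theorem ratio_lower (hm : 1 ≤ m) (h : ERec (fun i => if 1 ≤ i ∧ i ≤ m then 1 else 0) p)
    (c : ℕ) : ((c + 1 : ℕ) : ℝ) ≤ ∑ i ∈ Finset.Icc 1 m, (p c / p (c + 1)) ^ i := by
  have hp := p_pos hm h
  refine le_of_mul_le_mul_right ?_ (hp (c + 1))
  rw [perm_rec_sum m p h, Finset.sum_mul]
  refine Finset.sum_le_sum fun i _ => ?_
  split_ifs with hi
  · have := p_inc hm h c (c + 1 - i) i (by omega)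
    rw [Nat.sub_add_cancel hi] at this
    linarith
  · exact mul_nonneg (pow_nonneg (div_nonneg (hp _).le (hp _).le) _) (hp _).le

theorem ratio_upper (hm : 1 ≤ m) (h : ERec (fun i => if 1 ≤ i ∧ i ≤ m then 1 else 0) p)
    (c : ℕ) : ∑ i ∈ Finset.Icc 1 m, (p c / p (c + 1)) ^ i ≤ ((c + m : ℕ) : ℝ) := by
  have hp := p_pos hm h
  refine le_of_mul_le_mul_right ?_ (hp (c + m))
  rw [perm_rec_sum m p h, Finset.sum_mul]
  refine Finset.sum_le_sum fun i hi => ?_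
  rw [Finset.mem_Icc] at hi
  rw [if_pos (by omega)]
  have := p_dec hm h c (c + m - i) (by omega) i
  rw [Nat.sub_add_cancel (by omega)] at this
  linarith

end Peak

section SumLemmas

theorem sm_cheb (m : ℕ) (u : ℝ) (hu : 1 ≤ u) :
    ((m : ℝ) + 1) * ∑ i ∈ Finset.Icc 1 m, u ^ i ≤ 2 * ∑ i ∈ Finset.Icc 1 m, (i : ℝ) * u ^ i := by
  induction m with
  | zero => simp
  | succ m ih =>
    rw [Finset.sum_Icc_succ_top (by omega), Finset.sum_Icc_succ_top (by omega)]
    have h : ∑ i ∈ Finset.Icc 1 m, u ^ i ≤ m * u ^ (m + 1) := by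
      calc ∑ i ∈ Finset.Icc 1 m, u ^ i ≤ ∑ i ∈ Finset.Icc 1 m, u ^ (m + 1) :=
            Finset.sum_le_sum fun i hi => pow_le_pow_right₀ hu (by
              rw [Finset.mem_Icc] at hi; omega)
        _ = _ := by simp
    push_cast
    nlinarith

theorem sm_X1 (m : ℕ) (u v : ℝ) (hu : 1 ≤ u) (huv : u ≤ v) :
    (m : ℝ) * (v - u) * ∑ i ∈ Finset.Icc 1 m, u ^ i ≤
      2 * u * (∑ i ∈ Finset.Icc 1 m, v ^ i - ∑ i ∈ Finset.Icc 1 m, u ^ i) := by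
  have hu0 : 0 < u := by linarith
  have h1 := sm_cheb m u hu
  have h2 : (v - u) * ∑ i ∈ Finset.Icc 1 m, (i : ℝ) * u ^ i ≤
      u * (∑ i ∈ Finset.Icc 1 m, v ^ i - ∑ i ∈ Finset.Icc 1 m, u ^ i) := by
    rw [← Finset.sum_sub_distrib, Finset.mul_sum, Finset.mul_sum]
    refine Finset.sum_le_sum fun i _ => ?_
    have hb := one_add_mul_le_pow (a := v / u - 1) (by
      have : 0 ≤ v / u := div_nonneg (by linarith) hu0.le
      linarith) i
    have e : v ^ i = u ^ i * (1 + (v / u - 1)) ^ i := by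
      rw [← mul_pow]; congr 1; field_simp; ring
    rw [e]
    have h3 : u ^ i * (1 + (i : ℝ) * (v / u - 1)) ≤ u ^ i * (1 + (v / u - 1)) ^ i :=
      mul_le_mul_of_nonneg_left hb (by positivity)
    have h4 : u * (u ^ i * (1 + (i : ℝ) * (v / u - 1)) - u ^ i) = (v - u) * (i * u ^ i) := by
      field_simp; ring
    rw [← h4]
    exact mul_le_mul_of_nonneg_left (by linarith) hu0.le
  have hs : 0 ≤ ∑ i ∈ Finset.Icc 1 m, u ^ i := Finset.sum_nonneg fun i _ => by positivity
  have h5 : (v - u) * (((m : ℝ) + 1) * ∑ i ∈ Finset.Icc 1 m, u ^ i) ≤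
      (v - u) * (2 * ∑ i ∈ Finset.Icc 1 m, (i : ℝ) * u ^ i) :=
    mul_le_mul_of_nonneg_left h1 (by linarith)
  have h6 : 0 ≤ (v - u) * ∑ i ∈ Finset.Icc 1 m, u ^ i := mul_nonneg (by linarith) hs
  linarith

theorem sm_X2 (m : ℕ) (y x : ℝ) (hy : 0 ≤ y) (hyx : y ≤ x) :
    (∑ i ∈ Finset.Icc 1 m, x ^ i) * y ^ m ≤ x ^ m * ∑ i ∈ Finset.Icc 1 m, y ^ i := by
  rw [Finset.sum_mul, Finset.mul_sum]
  refine Finset.sum_le_sum fun i hi => ?_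
  rw [Finset.mem_Icc] at hi
  obtain ⟨k, rfl⟩ := Nat.exists_eq_add_of_le hi.2
  have : y ^ k ≤ x ^ k := pow_le_pow_left₀ hy hyx k
  have hx : 0 ≤ x := hy.trans hyx
  calc x ^ i * y ^ (i + k) = (x ^ i * y ^ i) * y ^ k := by ring
    _ ≤ (x ^ i * y ^ i) * x ^ k := mul_le_mul_of_nonneg_left this (by positivity)
    _ = _ := by ring

theorem sm_lt (m : ℕ) (hm : 1 ≤ m) (u v : ℝ) (hu : 0 ≤ u) (huv : u < v) :
    ∑ i ∈ Finset.Icc 1 m, u ^ i < ∑ i ∈ Finset.Icc 1 m, v ^ i := by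
  refine Finset.sum_lt_sum_of_nonempty ⟨1, by simp [hm]⟩ fun i hi => ?_
  rw [Finset.mem_Icc] at hi
  exact pow_lt_pow_left₀ huv hu (by omega)

theorem sm_le_four (m : ℕ) (x : ℝ) (hx : 4 / 3 ≤ x) :
    ∑ i ∈ Finset.Icc 1 m, x ^ i ≤ 4 * x ^ m := by
  induction m with
  | zero => simp
  | succ m ih =>
    rw [Finset.sum_Icc_succ_top (by omega), pow_succ]
    have : 0 < x ^ m := by positivity
    nlinarith

theorem sm_le_mul (m : ℕ) (x : ℝ) (hx : 1 ≤ x) :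
    ∑ i ∈ Finset.Icc 1 m, x ^ i ≤ m * x ^ m := by
  calc ∑ i ∈ Finset.Icc 1 m, x ^ i ≤ ∑ i ∈ Finset.Icc 1 m, x ^ m :=
        Finset.sum_le_sum fun i hi => pow_le_pow_right₀ hx (by
          rw [Finset.mem_Icc] at hi; omega)
    _ = _ := by simp

theorem le_sm (m : ℕ) (hm : 1 ≤ m) (x : ℝ) (hx : 0 ≤ x) :
    x ^ m ≤ ∑ i ∈ Finset.Icc 1 m, x ^ i :=
  Finset.single_le_sum (f := fun i => x ^ i) (fun i _ => by positivity) (by simp [hm])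

end SumLemmas

section Core

variable (F : Type) [Field F] [Fintype F]

theorem Gq_pos (m : ℕ) (y : ℝ) (hy : 0 ≤ y) (hyq : y < (Fintype.card F : ℝ)) : 0 < Gq F m y := by
  rw [Gq_eq F m y hy hyq]; exact Real.exp_pos _

theorem summable_lg_div (m : ℕ) (y : ℝ) (hy : 0 ≤ y) (hyq : y < (Fintype.card F : ℝ)) :
    Summable (fun j : ℕ => lg F m j * y ^ j / j) := (hasSum_lg F m y hy hyq).summable

theorem lg_two_mul (m : ℕ) (hm : 1 ≤ m) : ((Fintype.card F : ℝ) ^ m)⁻¹ ≤ lg F m (2 * m) := by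
  have hq := card_pos' F
  have h := Lc_two_mul F m hm
  have h' : (Fintype.card F : ℝ) ^ m ≤ (Lc F m (2 * m) : ℝ) := by exact_mod_cast h
  unfold lg lc
  rw [if_neg (by omega), le_div_iff₀ (by positivity), two_mul m, pow_add, ← mul_assoc,
    inv_mul_cancel₀ (by positivity), one_mul, ← two_mul m]
  exact h'

theorem Gq_gap (m : ℕ) (hm : 1 ≤ m) (x y : ℝ) (hy : 0 ≤ y) (hyx : y ≤ x)
    (hxq : x < (Fintype.card F : ℝ)) :
    Gq F m y ≤ Gq F m x *
      Real.exp (-(((Fintype.card F : ℝ) ^ m)⁻¹ * (x ^ (2 * m) - y ^ (2 * m)) / (2 * m))) := by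
  have hx : 0 ≤ x := hy.trans hyx
  have hyq : y < (Fintype.card F : ℝ) := hyx.trans_lt hxq
  rw [Gq_eq F m y hy hyq, Gq_eq F m x hx hxq, ← Real.exp_add, Real.exp_le_exp]
  have sx := summable_lg_div F m x hx hxq
  have sy := summable_lg_div F m y hy hyq
  have h := (sx.sub sy).le_tsum (2 * m) (fun j _ => by
    rw [sub_nonneg]
    have := pow_le_pow_left₀ hy hyx j
    have := lg_nonneg F m j
    gcongr)
  rw [sx.tsum_sub sy] at h
  have h2 : ((Fintype.card F : ℝ) ^ m)⁻¹ * (x ^ (2 * m) - y ^ (2 * m)) / (2 * m) ≤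
      lg F m (2 * m) * x ^ (2 * m) / ((2 * m : ℕ) : ℝ) - lg F m (2 * m) * y ^ (2 * m) / ((2 * m : ℕ) : ℝ) := by
    rw [← sub_div, ← mul_sub]
    push_cast
    have h3 : 0 ≤ x ^ (2 * m) - y ^ (2 * m) := sub_nonneg.2 (pow_le_pow_left₀ hy hyx _)
    have := lg_two_mul F m hm
    gcongr
  linarith

set_option maxHeartbeats 1000000 in
theorem upper_core (m n t : ℕ) (x : ℝ) (hm : 1 ≤ m) (hx : 1 ≤ x) (hxq : x < (Fintype.card F : ℝ))
    (hsx : ∑ i ∈ Finset.Icc 1 m, x ^ i = (n : ℝ)) (ht : 2 * m ≤ t) (htn : 2 * t ≤ n)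
    (hlow : (n : ℝ) / 4 ≤ x ^ m) (htM : 1024 * (t : ℝ) ≤ (n : ℝ) ^ 2 / (Fintype.card F : ℝ) ^ m) :
    polyProb F n m / permProb n m ≤ Gq F m x *
      Real.exp (-((n : ℝ) ^ 2 / (Fintype.card F : ℝ) ^ m * t / (128 * m * n))) := by
  have hq := card_pos' F
  set q : ℝ := (Fintype.card F : ℝ) with hqdef
  obtain ⟨P, hp, hPe⟩ : ∃ P : ℕ → ℝ, ERec (fun i => if 1 ≤ i ∧ i ≤ m then 1 else 0) P ∧
      ∀ k, permProb k m = P k := ⟨cyP m, cyP_rec m, fun k => permProb_eq_cyP k m hm⟩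
  obtain ⟨c, hc⟩ : ∃ c, n = c + 1 + t := ⟨n - t - 1, by omega⟩
  have hpos := p_pos hm hp
  set y := P c / P (c + 1) with hy
  have hy1 : 1 ≤ y := one_le_ratio hm hp c
  have ryu := ratio_upper hm hp c
  have ryl := ratio_lower hm hp c
  have ryp := p_peak hm hp c
  have ryR := ratio_mono hm hp c (c + t) (by omega)
  rw [← hy] at ryu ryl ryp ryR
  clear_value y
  have hy0 : 0 < y := by linarith
  have hnR : (n : ℝ) = c + 1 + t := by rw [hc]; push_cast; ring
  have htR : 2 * (m : ℝ) ≤ t := by exact_mod_cast ht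
  have htnR : 2 * (t : ℝ) ≤ n := by exact_mod_cast htn
  have hmR : (1 : ℝ) ≤ m := by exact_mod_cast hm
  have hn0 : (0 : ℝ) < n := by linarith
  have sy1 : ∑ i ∈ Finset.Icc 1 m, y ^ i ≤ n - t / 2 := by
    have := ryu
    push_cast at this
    rw [hnR]; linarith
  have sy2 : (n : ℝ) - t ≤ ∑ i ∈ Finset.Icc 1 m, y ^ i := by
    have := ryl
    push_cast at this
    rw [hnR]; linarith
  have hyx : y ≤ x := by
    by_contra hcon
    have := sm_lt m hm x y (by linarith) (not_le.1 hcon)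
    linarith
  have hyq : y < q := hyx.trans_lt hxq
  -- first bound
  have b1 : polyProb F n m * y ^ t ≤ P (c + 1) * Gq F m y := by
    rw [polyProb_conv F m n hm, Finset.sum_mul]
    have hG := hasSum_gc F m y hy0.le hyq
    have : ∑ k ∈ Finset.range (n + 1), gc F m k * y ^ k ≤ Gq F m y :=
      sum_le_hasSum _ (fun k _ => mul_nonneg (gc_nonneg F m k) (by positivity)) hG
    refine le_trans ?_ (mul_le_mul_of_nonneg_left this (hpos _).le)
    rw [Finset.mul_sum]
    refine Finset.sum_le_sum fun k hk => ?_
    rw [Finset.mem_range] at hk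
    rw [hPe]
    have pk := ryp (n - k)
    have key : P (n - k) * y ^ t ≤ P (c + 1) * y ^ k := by
      refine le_of_mul_le_mul_right ?_ (pow_pos hy0 n)
      have e1 : y ^ n = y ^ (n - k) * y ^ k := by rw [← pow_add]; congr 1; omega
      have e2 : y ^ n = y ^ (c + 1) * y ^ t := by rw [← pow_add, hc]
      calc P (n - k) * y ^ t * y ^ n
          = (P (n - k) * y ^ (n - k)) * (y ^ t * y ^ k) := by rw [e1]; ring
        _ ≤ (P (c + 1) * y ^ (c + 1)) * (y ^ t * y ^ k) :=
            mul_le_mul_of_nonneg_right pk (by positivity)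
        _ = _ := by rw [e2]; ring
    calc gc F m k * P (n - k) * y ^ t = gc F m k * (P (n - k) * y ^ t) := by ring
      _ ≤ gc F m k * (P (c + 1) * y ^ k) := mul_le_mul_of_nonneg_left key (gc_nonneg F m k)
      _ = _ := by ring
  -- second bound
  have hcn : c + t + 1 = n := by omega
  set R := P (c + t) / P (c + t + 1) with hR
  have b2 : P (c + 1) ≤ P n * R ^ t := by
    have := p_inc hm hp (c + t) (c + 1) t (by omega)
    rw [← hc] at this
    exact this
  have ryRu := ratio_upper hm hp (c + t)
  rw [← hR] at ryRu
  clear_value R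
  have hyR : y ≤ R := ryR
  have sR : ∑ i ∈ Finset.Icc 1 m, R ^ i ≤ n - 1 + m := by
    have := ryRu
    push_cast at this
    rw [hnR]; linarith
  have hRy : R ≤ y * (1 + 8 * t / (n * m)) := by
    have X := sm_X1 m y R hy1 hyR
    have X2 : (m : ℝ) * (R - y) * (n / 2) ≤ 2 * y * (3 / 2 * t) := by
      have h1 : (m : ℝ) * (R - y) * (n / 2) ≤ (m : ℝ) * (R - y) * ∑ i ∈ Finset.Icc 1 m, y ^ i :=
        mul_le_mul_of_nonneg_left (by linarith) (mul_nonneg (by linarith) (by linarith))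
      have h2 : 2 * y * (∑ i ∈ Finset.Icc 1 m, R ^ i - ∑ i ∈ Finset.Icc 1 m, y ^ i) ≤
          2 * y * (3 / 2 * t) := mul_le_mul_of_nonneg_left (by linarith) (by linarith)
      linarith
    have h3 : R - y ≤ y * (8 * t / (n * m)) := by
      rw [← mul_div_assoc, le_div_iff₀ (by positivity)]
      have : 0 ≤ y * t := by positivity
      nlinarith
    linarith
  have b3 : R ^ t ≤ y ^ t * Real.exp (8 * t ^ 2 / (n * m)) := by
    have h0 : 0 ≤ R := by linarith
    calc R ^ t ≤ (y * Real.exp (8 * t / (n * m))) ^ t := by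
          refine pow_le_pow_left₀ h0 (hRy.trans (mul_le_mul_of_nonneg_left ?_ hy0.le)) _
          have := Real.add_one_le_exp (8 * (t : ℝ) / (n * m)); linarith
      _ = _ := by
          rw [mul_pow, ← Real.exp_nat_mul]; congr 2; ring
  -- gap
  have gap := Gq_gap F m hm x y hy0.le hyx hxq
  have hym : y ^ (2 * m) ≤ x ^ (2 * m) * (1 - t / (2 * n)) := by
    have X := sm_X2 m y x hy0.le hyx
    rw [hsx] at X
    have hxm : 0 < x ^ m := by positivity
    have h1 : n * y ^ m ≤ x ^ m * (n - t / 2) :=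
      X.trans (mul_le_mul_of_nonneg_left sy1 hxm.le)
    have h2 : y ^ m ≤ x ^ m * (1 - t / (2 * n)) := by
      refine le_of_mul_le_mul_left (h1.trans (le_of_eq ?_)) hn0
      field_simp
    calc y ^ (2 * m) = y ^ m * y ^ m := by rw [two_mul, pow_add]
      _ ≤ x ^ m * (x ^ m * (1 - t / (2 * n))) :=
          mul_le_mul (pow_le_pow_left₀ hy0.le hyx m) h2 (by positivity) hxm.le
      _ = _ := by rw [two_mul m, pow_add]; ring
  have hgap2 : (n : ℝ) ^ 2 / q ^ m * t / (64 * m * n) ≤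
      (q ^ m)⁻¹ * (x ^ (2 * m) - y ^ (2 * m)) / (2 * m) := by
    have h1 : (n : ℝ) ^ 2 / 16 ≤ x ^ (2 * m) := by
      have : x ^ (2 * m) = (x ^ m) ^ 2 := by rw [mul_comm, pow_mul]
      rw [this]
      have := pow_le_pow_left₀ (by positivity) hlow 2
      linarith
    have h2 : (n : ℝ) ^ 2 / 16 * (t / (2 * n)) ≤ x ^ (2 * m) - y ^ (2 * m) := by
      have : (n : ℝ) ^ 2 / 16 * (t / (2 * n)) ≤ x ^ (2 * m) * (t / (2 * n)) :=
        mul_le_mul_of_nonneg_right h1 (by positivity)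
      linarith
    calc (n : ℝ) ^ 2 / q ^ m * t / (64 * m * n)
        = (q ^ m)⁻¹ * ((n : ℝ) ^ 2 / 16 * (t / (2 * n))) / (2 * m) := by
          have := pow_pos hq m
          field_simp; ring
      _ ≤ _ := by gcongr
  have h8 : 8 * (t : ℝ) ^ 2 / (n * m) ≤ (n : ℝ) ^ 2 / q ^ m * t / (128 * m * n) := by
    rw [div_le_div_iff₀ (by positivity) (by positivity)]
    have : 1024 * (t : ℝ) * (t * (n * m)) ≤ (n : ℝ) ^ 2 / q ^ m * (t * (n * m)) :=
      mul_le_mul_of_nonneg_right htM (by positivity)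
    nlinarith
  have hG0 := (Gq_pos F m x (by linarith) hxq)
  rw [hPe, div_le_iff₀ (hpos n)]
  refine le_of_mul_le_mul_right (b1.trans ?_) (pow_pos hy0 t)
  set E := (n : ℝ) ^ 2 / q ^ m * t / (128 * m * n) with hE
  have hE2 : (n : ℝ) ^ 2 / q ^ m * t / (64 * m * n) = 2 * E := by
    rw [hE]; have := pow_pos hq m; field_simp; ring
  have c1 : Gq F m y ≤ Gq F m x * Real.exp (-(2 * E)) := by
    refine gap.trans (mul_le_mul_of_nonneg_left (Real.exp_le_exp.2 ?_) hG0.le)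
    rw [← hE2]; exact neg_le_neg hgap2
  have c2 : P (c + 1) ≤ P n * (y ^ t * Real.exp E) := by
    refine b2.trans (mul_le_mul_of_nonneg_left (b3.trans ?_) (hpos n).le)
    exact mul_le_mul_of_nonneg_left (Real.exp_le_exp.2 h8) (by positivity)
  calc P (c + 1) * Gq F m y
      ≤ (P n * (y ^ t * Real.exp E)) * (Gq F m x * Real.exp (-(2 * E))) :=
        mul_le_mul c2 c1 (Gq_pos F m y hy0.le hyq).le
          (mul_nonneg (hpos n).le (by positivity))
    _ = _ := by
        have : Real.exp (-E) = Real.exp E * Real.exp (-(2 * E)) := by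
          rw [← Real.exp_add]; congr 1; ring
        rw [this]; ring

set_option maxHeartbeats 1000000 in
theorem sum_lg_bound (m : ℕ) (y τ : ℝ) (hy : 0 < y) (hτ0 : 0 ≤ τ) (hτ1 : τ < 1)
    (h1 : y ≤ τ * (Fintype.card F : ℝ)) (h2 : √(Fintype.card F : ℝ) ≤ τ * y) :
    ∑' j : ℕ, lg F m j * y ^ j ≤ 4 / (1 - τ) * (y ^ (2 * m) / (Fintype.card F : ℝ) ^ m) := by
  have hq := card_pos' F
  have hq1 := one_lt_card' F
  have hyq : y < (Fintype.card F : ℝ) := h1.trans_lt (by nlinarith)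
  have hS := summable_lg F m y hy.le hyq
  have hlg := lg_le F m
  set q : ℝ := (Fintype.card F : ℝ) with hqdef
  set g := √q with hg
  have hg1 : 1 ≤ g := by rw [hg]; exact Real.one_le_sqrt.2 hq1.le
  have hgq : g ^ 2 = q := Real.sq_sqrt hq.le
  set W := y ^ (2 * m) / q ^ m with hW
  have hW0 : 0 < W := by positivity
  have hgeo : ∀ N, ∑ i ∈ Finset.range N, τ ^ i ≤ 1 / (1 - τ) := fun N => by
    have := sum_le_hasSum (Finset.range N) (fun i _ => pow_nonneg hτ0 i)
      (hasSum_geometric_of_lt_one hτ0 hτ1)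
    rwa [one_div]
  rw [← hS.sum_add_tsum_nat_add (2 * m)]
  have A : ∑ j ∈ Finset.range (2 * m), lg F m j * y ^ j ≤ 2 * W * (1 / (1 - τ)) := by
    have : ∀ j ∈ Finset.range (2 * m), lg F m j * y ^ j ≤ 2 * W * τ ^ (2 * m - 1 - j) := by
      intro j hj
      rw [Finset.mem_range] at hj
      have e1 : q ^ (min m (j / 2)) ≤ g ^ j := by
        rw [← hgq, ← pow_mul]
        exact pow_le_pow_right₀ hg1 (by omega)
      have e2 : lg F m j * y ^ j ≤ 2 * (y / g) ^ j := by
        calc lg F m j * y ^ j ≤ (2 * g ^ j / q ^ j) * y ^ j := by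
              refine mul_le_mul_of_nonneg_right ((hlg j).trans ?_) (by positivity)
              gcongr
          _ = _ := by
              rw [← hgq, div_pow]; field_simp; ring
      have hw : 1 ≤ τ * (y / g) := by
        rw [← mul_div_assoc, le_div_iff₀ (by positivity)]; linarith
      have e3 : (y / g) ^ (2 * m) = W := by
        rw [hW, div_pow, pow_mul g, hgq]
      have e4 : (y / g) ^ j ≤ W * τ ^ (2 * m - j) := by
        have : 1 ≤ (τ * (y / g)) ^ (2 * m - j) := one_le_pow₀ hw
        calc (y / g) ^ j ≤ (y / g) ^ j * (τ * (y / g)) ^ (2 * m - j) :=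
              le_mul_of_one_le_right (by positivity) this
          _ = (y / g) ^ (j + (2 * m - j)) * τ ^ (2 * m - j) := by rw [mul_pow, pow_add]; ring
          _ = _ := by rw [← e3]; congr 2; omega
      have e5 : τ ^ (2 * m - j) ≤ τ ^ (2 * m - 1 - j) :=
        pow_le_pow_of_le_one hτ0 hτ1.le (by omega)
      nlinarith
    refine (Finset.sum_le_sum this).trans ?_
    rw [← Finset.mul_sum, Finset.sum_range_reflect (fun i => τ ^ i)]
    exact mul_le_mul_of_nonneg_left (hgeo _) (by positivity)
  have B : ∑' j : ℕ, lg F m (j + 2 * m) * y ^ (j + 2 * m) ≤ 2 * W * (1 / (1 - τ)) := by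
    have hs := (hasSum_geometric_of_lt_one hτ0 hτ1).mul_left (2 * W)
    rw [one_div, ← hs.tsum_eq]
    refine Summable.tsum_le_tsum (fun j => ?_) ((summable_nat_add_iff (2 * m)).2 hS) hs.summable
    have e1 : q ^ (min m ((j + 2 * m) / 2)) = q ^ m := by congr 1; omega
    have e2 := hlg (j + 2 * m)
    rw [e1] at e2
    calc lg F m (j + 2 * m) * y ^ (j + 2 * m)
        ≤ (2 * q ^ m / q ^ (j + 2 * m)) * y ^ (j + 2 * m) :=
          mul_le_mul_of_nonneg_right e2 (by positivity)
      _ = 2 * W * (y / q) ^ j := by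
          rw [hW, div_pow, pow_add, pow_add, pow_mul, pow_mul]
          have := pow_pos hq m
          have := pow_pos hq j
          field_simp
          ring
      _ ≤ 2 * W * τ ^ j := by
          have : y / q ≤ τ := by rwa [div_le_iff₀ hq]
          gcongr
  have : 4 / (1 - τ) * W = 2 * W * (1 / (1 - τ)) + 2 * W * (1 / (1 - τ)) := by ring
  linarith

set_option maxHeartbeats 1000000 in
theorem lower_core (m n k0 : ℕ) (x A : ℝ) (hm : 1 ≤ m) (hx : 1 ≤ x)
    (hyq : x * Real.exp (1 / m) < (Fintype.card F : ℝ))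
    (hsx : ∑ i ∈ Finset.Icc 1 m, x ^ i = (n : ℝ))
    (hA : ∑' j : ℕ, lg F m j * (x * Real.exp (1 / m)) ^ j ≤ A)
    (hk : 2 * A ≤ k0 + 1) (hkn : 2 * k0 ≤ n) (hn : 1 ≤ n) :
    (1 - Real.exp (-A / m)) * Gq F m x * Real.exp (-(4 * k0 ^ 2 / (n * m))) ≤
      polyProb F n m / permProb n m := by
  obtain ⟨P, hp, hPe⟩ : ∃ P : ℕ → ℝ, ERec (fun i => if 1 ≤ i ∧ i ≤ m then 1 else 0) P ∧
      ∀ k, permProb k m = P k := ⟨cyP m, cyP_rec m, fun k => permProb_eq_cyP k m hm⟩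
  have hpos := p_pos hm hp
  have hmR : (1 : ℝ) ≤ m := by exact_mod_cast hm
  have hnR : (1 : ℝ) ≤ n := by exact_mod_cast hn
  have hknR : 2 * (k0 : ℝ) ≤ n := by exact_mod_cast hkn
  set y := x * Real.exp (1 / m) with hy
  have he1 : 1 ≤ Real.exp (1 / (m : ℝ)) := Real.one_le_exp (by positivity)
  have hx0 : 0 < x := by linarith
  have hxy : x ≤ y := le_mul_of_one_le_right hx0.le he1
  have hy0 : 0 < y := by linarith
  have hxq : x < (Fintype.card F : ℝ) := hxy.trans_lt hyq
  have hypow : ∀ k : ℕ, y ^ k = x ^ k * Real.exp (k / m) := fun k => by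
    rw [hy, mul_pow, ← Real.exp_nat_mul]; congr 2; ring
  clear_value y
  -- Gq comparison
  have g1 : Gq F m y ≤ Gq F m x * Real.exp (A / m) := by
    rw [Gq_eq F m y hy0.le hyq, Gq_eq F m x hx0.le hxq, ← Real.exp_add, Real.exp_le_exp]
    have sx := summable_lg_div F m x hx0.le hxq
    have sy := summable_lg_div F m y hy0.le hyq
    have s := summable_lg F m y hy0.le hyq
    have : ∑' j : ℕ, lg F m j * y ^ j / j ≤
        ∑' j : ℕ, (lg F m j * x ^ j / j + lg F m j * y ^ j / m) := by
      refine Summable.tsum_le_tsum (fun j => ?_) sy (sx.add (s.div_const _))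
      rcases Nat.eq_zero_or_pos j with rfl | hj
      · simp [lg_zero]
      have hjR : (0 : ℝ) < j := by exact_mod_cast hj
      have h1 : x ^ j = y ^ j * Real.exp (-(j / m)) := by
        rw [hypow, mul_assoc, ← Real.exp_add]; simp
      have h2 := Real.add_one_le_exp (-((j : ℝ) / m))
      have h3 : 0 ≤ lg F m j * y ^ j / j := by
        have := lg_nonneg F m j
        positivity
      rw [h1]
      calc lg F m j * y ^ j / j = lg F m j * y ^ j / j * (-(j / m) + 1) + lg F m j * y ^ j / m := by
            field_simp; ring
        _ ≤ lg F m j * y ^ j / j * Real.exp (-(j / m)) + lg F m j * y ^ j / m := by gcongr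
        _ = _ := by ring
    rw [sx.tsum_add (s.div_const _), tsum_div_const] at this
    refine this.trans ?_
    gcongr
  -- tail
  have hGx := hasSum_gc F m x hx0.le hxq
  have hGy := hasSum_gc F m y hy0.le hyq
  have tail : Gq F m x ≤ ∑ k ∈ Finset.range (k0 + 1), gc F m k * x ^ k +
      Real.exp (-((k0 + 1) / m)) * Gq F m y := by
    have hfin : HasSum (fun k => if k ∈ Finset.range (k0 + 1) then gc F m k * x ^ k else 0)
        (∑ k ∈ Finset.range (k0 + 1), gc F m k * x ^ k) := by
      have := hasSum_sum_of_ne_finset_zero (L := .unconditional ℕ) (s := Finset.range (k0 + 1))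
        (f := fun k => if k ∈ Finset.range (k0 + 1) then gc F m k * x ^ k else 0)
        (fun k hk => if_neg hk)
      convert! this using 1
      exact Finset.sum_congr rfl fun k hk => (if_pos hk).symm
    refine hasSum_le (fun k => ?_) hGx (hfin.add (hGy.mul_left _))
    have hgk := gc_nonneg F m k
    split_ifs with hk'
    · have : 0 ≤ Real.exp (-((k0 + 1) / m)) * (gc F m k * y ^ k) := by positivity
      linarith
    · rw [zero_add, hypow]
      have hk2 : (k0 : ℝ) + 1 ≤ k := by
        rw [Finset.mem_range, not_lt] at hk'; exact_mod_cast hk'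
      have : 1 ≤ Real.exp (-((k0 + 1) / m)) * Real.exp (k / m) := by
        rw [← Real.exp_add]
        refine Real.one_le_exp ?_
        rw [neg_add_eq_sub, ← sub_div]
        exact div_nonneg (by linarith) (by linarith)
      calc gc F m k * x ^ k ≤ gc F m k * x ^ k * (Real.exp (-((k0 + 1) / m)) * Real.exp (k / m)) :=
            le_mul_of_one_le_right (by positivity) this
        _ = _ := by ring
  have hG0 := Gq_pos F m x hx0.le hxq
  have main1 : (1 - Real.exp (-A / m)) * Gq F m x ≤
      ∑ k ∈ Finset.range (k0 + 1), gc F m k * x ^ k := by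
    have : Real.exp (-((k0 + 1) / m)) * Gq F m y ≤ Real.exp (-A / m) * Gq F m x := by
      calc Real.exp (-((k0 + 1) / m)) * Gq F m y
          ≤ Real.exp (-(2 * A / m)) * (Gq F m x * Real.exp (A / m)) := by
            refine mul_le_mul (Real.exp_le_exp.2 (neg_le_neg ?_)) g1
              (Gq_pos F m y hy0.le hyq).le (Real.exp_pos _).le
            gcongr
        _ = _ := by
            have : Real.exp (-A / m) = Real.exp (-(2 * A / m)) * Real.exp (A / m) := by
              rw [← Real.exp_add]; congr 1; ring
            rw [this]; ring
    linarith
  -- compare z and x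
  obtain ⟨c, hc⟩ : ∃ c, n = c + 1 + k0 := ⟨n - k0 - 1, by omega⟩
  have hcR : (n : ℝ) = c + 1 + k0 := by rw [hc]; push_cast; ring
  set z := P c / P (c + 1) with hz
  have hz1 : 1 ≤ z := one_le_ratio hm hp c
  have rzl := ratio_lower hm hp c
  have rzd := p_dec hm hp c
  rw [← hz] at rzl
  simp only [← hz] at rzd
  clear_value z
  have sz : (n : ℝ) - k0 ≤ ∑ i ∈ Finset.Icc 1 m, z ^ i := by
    have := rzl
    push_cast at this
    rw [hcR]; linarith
  have hxz : x ≤ z * (1 + 4 * k0 / (n * m)) := by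
    rcases le_total x z with h | h
    · have : 0 ≤ z * (4 * k0 / (n * m)) := by positivity
      linarith
    · have X := sm_X1 m z x hz1 h
      rw [hsx] at X
      have h1 : (m : ℝ) * (x - z) * (n / 2) ≤ (m : ℝ) * (x - z) * ∑ i ∈ Finset.Icc 1 m, z ^ i :=
        mul_le_mul_of_nonneg_left (by linarith) (mul_nonneg (by linarith) (by linarith))
      have h2 : 2 * z * (n - ∑ i ∈ Finset.Icc 1 m, z ^ i) ≤ 2 * z * k0 :=
        mul_le_mul_of_nonneg_left (by linarith) (by linarith)
      have h3 : x - z ≤ z * (4 * k0 / (n * m)) := by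
        rw [← mul_div_assoc, le_div_iff₀ (by positivity)]
        nlinarith
      linarith
  have hxz2 : x ≤ z * Real.exp (4 * k0 / (n * m)) := by
    refine hxz.trans (mul_le_mul_of_nonneg_left ?_ (by linarith))
    have := Real.add_one_le_exp (4 * (k0 : ℝ) / (n * m)); linarith
  have main2 : Real.exp (-(4 * k0 ^ 2 / (n * m))) * ∑ k ∈ Finset.range (k0 + 1), gc F m k * x ^ k ≤
      polyProb F n m / permProb n m := by
    rw [hPe, le_div_iff₀ (hpos n), polyProb_conv F m n hm]
    refine le_trans ?_ (Finset.sum_le_sum_of_subset_of_nonneg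
      (Finset.range_subset_range.2 (by omega : k0 + 1 ≤ n + 1)) (fun k _ _ => ?_))
    · rw [Finset.mul_sum, Finset.sum_mul]
      refine Finset.sum_le_sum fun k hk' => ?_
      rw [Finset.mem_range] at hk'
      have hkk : (k : ℝ) ≤ k0 := by
        have : k ≤ k0 := by omega
        exact_mod_cast this
      rw [hPe]
      have d := rzd (n - k) (by omega) k
      rw [Nat.sub_add_cancel (by omega)] at d
      have h1 : Real.exp (-(4 * k0 ^ 2 / (n * m))) * x ^ k ≤ z ^ k := by
        calc Real.exp (-(4 * k0 ^ 2 / (n * m))) * x ^ k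
            ≤ Real.exp (-(4 * k0 ^ 2 / (n * m))) * (z * Real.exp (4 * k0 / (n * m))) ^ k := by
              gcongr
          _ = z ^ k * Real.exp (-(4 * k0 ^ 2 / (n * m)) + k * (4 * k0 / (n * m))) := by
              rw [mul_pow, ← Real.exp_nat_mul, Real.exp_add]; ring
          _ ≤ z ^ k * 1 := by
              refine mul_le_mul_of_nonneg_left ?_ (by positivity)
              rw [Real.exp_le_one_iff]
              have : (k : ℝ) * (4 * k0 / (n * m)) ≤ k0 * (4 * k0 / (n * m)) := by gcongr
              have e : (k0 : ℝ) * (4 * k0 / (n * m)) = 4 * k0 ^ 2 / (n * m) := by ring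
              linarith
          _ = z ^ k := mul_one _
      have hgk := gc_nonneg F m k
      calc Real.exp (-(4 * k0 ^ 2 / (n * m))) * (gc F m k * x ^ k) * P n
          = gc F m k * (P n * (Real.exp (-(4 * k0 ^ 2 / (n * m))) * x ^ k)) := by ring
        _ ≤ gc F m k * (P n * z ^ k) :=
            mul_le_mul_of_nonneg_left (mul_le_mul_of_nonneg_left h1 (hpos n).le) hgk
        _ ≤ gc F m k * P (n - k) := mul_le_mul_of_nonneg_left d hgk
    · rw [hPe]
      exact mul_nonneg (gc_nonneg F m k) (hpos _).le
  refine le_trans ?_ main2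
  rw [mul_comm]
  exact mul_le_mul_of_nonneg_left main1 (Real.exp_pos _).le

end Core

section Final

/-- Numerical facts valid for all large `n`. -/
theorem x_facts (q ε ℓ x : ℝ) (n m : ℕ) (hε : 0 < ε) (hε2 : ε < 1 / 2) (hq : 2 ≤ q)
    (hn : 1 ≤ n) (hm : 1 ≤ m) (hℓ : ℓ = Real.log n) (hℓ1 : 4 / ε ≤ ℓ) (hℓpos : 0 < ℓ)
    (hm1 : (1 + ε) * ℓ ≤ m * Real.log q) (hm2 : m * Real.log q ≤ (2 - ε) * ℓ)
    (hlogm : 2 * Real.log m ≤ ε * ℓ / 2)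
    (hmn : m ≤ n) (hx0 : 0 < x) (hsx : ∑ i ∈ Finset.Icc 1 m, x ^ i = (n : ℝ)) :
    1 ≤ x ∧ x ^ m ≤ n ∧ (n : ℝ) / 4 ≤ x ^ m ∧
      x * Real.exp (1 / m) ≤ Real.exp (-(ε * Real.log q / 8)) * q ∧
      √q ≤ Real.exp (-(ε * Real.log q / 8)) * x := by
  have hq0 : 0 < q := by linarith
  have hL : 0 < Real.log q := Real.log_pos (by linarith)
  have hmR : (1 : ℝ) ≤ m := by exact_mod_cast hm
  have hnR : (1 : ℝ) ≤ n := by exact_mod_cast hn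
  have hx1 : 1 ≤ x := by
    by_contra hcon
    have := sm_lt m hm x 1 hx0.le (not_le.1 hcon)
    rw [hsx] at this
    simp at this
    omega
  have hxm : x ^ m ≤ n := hsx ▸ le_sm m hm x hx0.le
  have hnm : (n : ℝ) ≤ m * x ^ m := hsx ▸ sm_le_mul m x hx1
  set L := Real.log q with hLdef
  set X := Real.log x with hX
  have l1 : m * X ≤ ℓ := by
    rw [hℓ, hX, ← Real.log_pow]
    exact Real.log_le_log (by positivity) hxm
  have l2 : ℓ ≤ Real.log m + m * X := by
    rw [hℓ, hX, ← Real.log_pow, ← Real.log_mul (by positivity) (by positivity)]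
    exact Real.log_le_log (by positivity) hnm
  have k1 : ε / 4 * L ≤ 2 * X - L := by
    refine le_of_mul_le_mul_left ?_ (by linarith : (0 : ℝ) < m)
    nlinarith
  have k2 : X - L ≤ -(ε / 2 * L) := by
    refine le_of_mul_le_mul_left ?_ (by linarith : (0 : ℝ) < m)
    have : (m * L) * (ε / 2) ≤ (2 - ε) * ℓ * (ε / 2) := mul_le_mul_of_nonneg_right hm2 (by linarith)
    nlinarith
  have k3 : 1 / (m : ℝ) ≤ ε / 4 * L := by
    rw [div_le_iff₀ (by linarith)]
    have h4 : 4 ≤ ε * ℓ := by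
      rw [div_le_iff₀ hε] at hℓ1; linarith
    nlinarith
  have hxe : x = Real.exp X := (Real.exp_log hx0).symm
  have hqe : q = Real.exp L := (Real.exp_log hq0).symm
  have hsq : √q = Real.exp (L / 2) := by
    rw [hqe, Real.exp_half]
  refine ⟨hx1, hxm, ?_, ?_, ?_⟩
  · have h1 : √q ≤ x := by
      rw [hsq, hxe, Real.exp_le_exp]
      nlinarith
    have h2 : 4 / 3 ≤ √q := by
      refine Real.le_sqrt_of_sq_le ?_
      norm_num; linarith
    have := sm_le_four m x (h2.trans h1)
    rw [hsx] at this
    linarith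
  · rw [hqe, hxe, ← Real.exp_add, ← Real.exp_add, Real.exp_le_exp]
    nlinarith
  · rw [hsq, hxe, ← Real.exp_add, Real.exp_le_exp]
    nlinarith

theorem expo_eq (n : ℝ) (m : ℕ) (q : ℝ) (hn : 0 < n) (hm : (0 : ℝ) < m) (hq : 0 < q) :
    n ^ 3 / ((m : ℝ) * q ^ (2 * m)) = (n ^ 2 / q ^ m) ^ 2 / (m * n) := by
  rw [mul_comm 2 m, pow_mul]
  have := pow_pos hq m
  generalize q ^ m = Q at *
  field_simp

end Final

set_option maxHeartbeats 1000000

/-- Fix a prime power `q` (the cardinality of a finite field `F`) and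
`ε ∈ (0,1/2)`. There exist `c, C > 0` such that for every `δ > 0` there is `N` with:
for all `n ≥ N` and all `m` with `(1+ε)·log_q n ≤ m ≤ (2−ε)·log_q n`, one has
`(1−δ)·G_q(x)·exp(−C·n³/(m·q^{2m})) ≤ p_{n,m,q}/p_{n,m} ≤ (1+δ)·G_q(x)·exp(−c·n³/(m·q^{2m}))`. -/
theorem stmt12 :
    ∀ (F : Type) [Field F] [Fintype F], ∀ ε : ℝ, 0 < ε → ε < 1 / 2 →
      ∃ c C : ℝ, 0 < c ∧ 0 < C ∧ ∀ δ : ℝ, 0 < δ → ∃ N : ℕ, ∀ n : ℕ, N ≤ n → ∀ m : ℕ,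
      (1 + ε) * Real.log n / Real.log (Fintype.card F) ≤ (m : ℝ) →
      (m : ℝ) ≤ (2 - ε) * Real.log n / Real.log (Fintype.card F) →
      ∀ x : ℝ, 0 < x → (∑ i ∈ Finset.Icc 1 m, x ^ i) = (n : ℝ) →
      (1 - δ) * Gq F m x *
          Real.exp (-C * (n : ℝ) ^ 3 / ((m : ℝ) * (Fintype.card F : ℝ) ^ (2 * m))) ≤
        polyProb F n m / permProb n m ∧
      polyProb F n m / permProb n m ≤
        (1 + δ) * Gq F m x *
          Real.exp (-c * (n : ℝ) ^ 3 / ((m : ℝ) * (Fintype.card F : ℝ) ^ (2 * m))) := by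
  intro F _ _ ε hε hε2
  have hq2 : (2 : ℝ) ≤ (Fintype.card F : ℝ) := by exact_mod_cast card_two_le F
  obtain ⟨q, hq⟩ : ∃ q : ℝ, q = (Fintype.card F : ℝ) := ⟨_, rfl⟩
  rw [← hq] at hq2
  rw [← hq]
  have hq0 : 0 < q := by linarith
  have hLhalf : 1 / 2 ≤ Real.log q := by
    have h1 := Real.log_two_gt_d9
    have h2 := Real.log_le_log (by norm_num) hq2
    linarith
  set L := Real.log q with hL
  set τ := Real.exp (-(ε * L / 8)) with hτ
  have hτ0 : 0 < τ := Real.exp_pos _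
  have hτ1 : τ < 1 := by
    rw [hτ, Real.exp_lt_one_iff]
    have : 0 < ε * L := by positivity
    linarith
  set B := 4 / (1 - τ) * Real.exp 2 with hB
  have hB1 : 1 ≤ B := by
    have h1 : 1 ≤ 4 / (1 - τ) := by
      rw [le_div_iff₀ (by linarith)]; linarith
    have h2 : 1 ≤ Real.exp 2 := Real.one_le_exp (by norm_num)
    nlinarith
  refine ⟨1 / 2 ^ 18, 16 * B ^ 2, by norm_num, by positivity, fun δ hδ => ?_⟩
  set K := 10000 + 4 * B + 4 * |Real.log δ| with hK
  have hlogδ := abs_nonneg (Real.log δ)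
  have hK1 : 10000 ≤ K := by rw [hK]; linarith
  have hKB : 4 * B ≤ K := by rw [hK]; linarith
  have hKδ : 4 * |Real.log δ| ≤ K := by rw [hK]; linarith
  set T := 1 + 4 / ε + 32 * K / ε ^ 2 with hT
  clear_value T K B τ L
  refine ⟨⌈Real.exp T⌉₊, fun n hn m hm1 hm2 x hx0 hsx => ?_⟩
  have hnT : Real.exp T ≤ n := (Nat.le_ceil _).trans (by exact_mod_cast hn)
  have hnpos : (0 : ℝ) < n := (Real.exp_pos _).trans_le hnT
  have hn1 : 1 ≤ n := by exact_mod_cast hnpos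
  obtain ⟨ℓ, hℓ⟩ : ∃ ℓ, ℓ = Real.log n := ⟨_, rfl⟩
  rw [← hℓ] at hm1 hm2
  have hℓT : T ≤ ℓ := by rw [hℓ]; exact (Real.le_log_iff_exp_le hnpos).2 hnT
  have hp1 : 0 < 4 / ε := by positivity
  have hp2 : 0 < 32 * K / ε ^ 2 := by positivity
  have hℓ1 : 1 ≤ ℓ := by rw [hT] at hℓT; linarith
  have hℓ2 : 4 / ε ≤ ℓ := by rw [hT] at hℓT; linarith
  have hℓ3 : 32 * K / ε ^ 2 ≤ ℓ := by rw [hT] at hℓT; linarith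
  have hnexp : (n : ℝ) = Real.exp ℓ := by rw [hℓ, Real.exp_log hnpos]
  have hgrow : K * ℓ ≤ Real.exp (ε * ℓ / 4) := by
    have h1 := Real.quadratic_le_exp_of_nonneg (x := ε * ℓ / 4) (by positivity)
    have h2 : 0 ≤ ε * ℓ / 4 := by positivity
    rw [div_le_iff₀ (by positivity)] at hℓ3
    have h3 : 32 * K * ℓ ≤ ℓ * ε ^ 2 * ℓ := mul_le_mul_of_nonneg_right hℓ3 (by linarith)
    nlinarith
  have hL0 : 0 < L := by linarith
  rw [div_le_iff₀ hL0] at hm1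
  rw [le_div_iff₀ hL0] at hm2
  have hm : 1 ≤ m := by
    rcases Nat.eq_zero_or_pos m with rfl | h
    · exfalso
      have : 0 < (1 + ε) * ℓ := by positivity
      simp at hm1; linarith
    · exact h
  have hmR : (1 : ℝ) ≤ m := by exact_mod_cast hm
  have hm4 : (m : ℝ) ≤ 4 * ℓ := by nlinarith
  have hεle : Real.exp (ε * ℓ / 4) ≤ Real.exp (ε * ℓ) := Real.exp_le_exp.2 (by nlinarith)
  have hεn : Real.exp (ε * ℓ) ≤ n := by
    rw [hnexp, Real.exp_le_exp]; nlinarith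
  have hm4K : (m : ℝ) ≤ Real.exp (ε * ℓ / 4) := by
    refine hm4.trans (le_trans ?_ hgrow)
    exact mul_le_mul_of_nonneg_right (by linarith) (by linarith)
  have hmn : m ≤ n := by
    have : (m : ℝ) ≤ n := by linarith
    exact_mod_cast this
  have hlogm : 2 * Real.log m ≤ ε * ℓ / 2 := by
    have := (Real.log_le_iff_le_exp (by linarith : (0 : ℝ) < m)).2 hm4K
    linarith
  obtain ⟨hx1, hxm, hxlow, hyq, hsq⟩ := x_facts q ε ℓ x n m hε hε2 hq2 hn1 hm hℓ hℓ2 (by linarith)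
    (hL ▸ hm1) (hL ▸ hm2) hlogm hmn hx0 hsx
  rw [← hL, ← hτ] at hyq hsq
  -- the quantity `M`
  obtain ⟨M, hM⟩ : ∃ M, M = (n : ℝ) ^ 2 / q ^ m := ⟨_, rfl⟩
  have hqm : q ^ m = Real.exp (m * L) := by rw [Real.exp_nat_mul, hL, Real.exp_log hq0]
  have hM2 : M = Real.exp (2 * ℓ - m * L) := by
    rw [hM, hqm, hnexp, ← Real.exp_nat_mul, Real.exp_sub]; norm_num
  have hMlow : Real.exp (ε * ℓ) ≤ M := by
    rw [hM2, Real.exp_le_exp]; linarith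
  have hMup : M * Real.exp (ε * ℓ) ≤ n := by
    rw [hM2, hnexp, ← Real.exp_add, Real.exp_le_exp]; linarith
  have hM0 : 0 < M := (Real.exp_pos _).trans_le hMlow
  have hKM : K * ℓ ≤ M := by linarith
  have hKn : M * K ≤ n := by
    refine le_trans (mul_le_mul_of_nonneg_left ?_ hM0.le) hMup
    have : K * 1 ≤ K * ℓ := mul_le_mul_of_nonneg_left hℓ1 (by linarith)
    linarith
  have hexpo : (n : ℝ) ^ 3 / ((m : ℝ) * q ^ (2 * m)) = M ^ 2 / (m * n) := by
    rw [hM]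
    exact expo_eq n m q hnpos (by linarith) hq0
  have hKℓ : 10000 * ℓ ≤ K * ℓ := mul_le_mul_of_nonneg_right hK1 (by linarith)
  have hxy : x ≤ x * Real.exp (1 / m) := le_mul_of_one_le_right hx0.le (Real.one_le_exp (by positivity))
  have hyq' : x * Real.exp (1 / m) < q := hyq.trans_lt (mul_lt_of_lt_one_left hq0 hτ1)
  have hxq : x < q := hxy.trans_lt hyq'
  have hG0 : 0 < Gq F m x := Gq_pos F m x hx0.le (hq ▸ hxq)
  constructor
  · -- lower bound
    have hS := sum_lg_bound F m (x * Real.exp (1 / m)) τ (by positivity) hτ0.le hτ1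
      (by rw [← hq]; exact hyq) (by
        rw [← hq]
        exact hsq.trans (mul_le_mul_of_nonneg_left hxy hτ0.le))
    rw [← hq] at hS
    have hS2 : ∑' j : ℕ, lg F m j * (x * Real.exp (1 / m)) ^ j ≤ B * M := by
      refine hS.trans ?_
      rw [hB, mul_assoc]
      refine mul_le_mul_of_nonneg_left ?_ (div_nonneg (by norm_num) (by linarith))
      rw [hM, ← mul_div_assoc]
      refine div_le_div_of_nonneg_right ?_ (by positivity)
      rw [mul_pow, ← Real.exp_nat_mul, mul_comm]
      have e : ((2 * m : ℕ) : ℝ) * (1 / m) = 2 := by push_cast; field_simp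
      rw [e]
      refine mul_le_mul_of_nonneg_left ?_ (Real.exp_pos _).le
      rw [mul_comm 2 m, pow_mul]
      exact pow_le_pow_left₀ (by positivity) hxm 2
    have hA0 : 0 ≤ 2 * (B * M) := by positivity
    have hfl := Nat.floor_le hA0
    have hfl2 := (Nat.lt_floor_add_one (2 * (B * M))).le
    set k0 := ⌊2 * (B * M)⌋₊ with hk0
    have hkn : 2 * k0 ≤ n := by
      have : 2 * (k0 : ℝ) ≤ n := by
        have : M * (4 * B) ≤ M * K := mul_le_mul_of_nonneg_left hKB hM0.le
        linarith
      exact_mod_cast this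
    have low := lower_core F m n k0 x (B * M) hm hx1 (hq ▸ hyq') hsx hS2 hfl2 hkn hn1
    refine le_trans ?_ low
    have hδ1 : Real.exp (-(B * M) / m) ≤ δ := by
      rw [← Real.le_log_iff_exp_le hδ, neg_div, neg_le]
      have h1 : -Real.log δ ≤ |Real.log δ| := neg_le_abs _
      refine h1.trans ?_
      rw [le_div_iff₀ (by linarith)]
      calc |Real.log δ| * m ≤ |Real.log δ| * (4 * ℓ) := mul_le_mul_of_nonneg_left hm4 hlogδ
        _ = (4 * |Real.log δ|) * ℓ := by ring
        _ ≤ K * ℓ := mul_le_mul_of_nonneg_right hKδ (by linarith)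
        _ ≤ M := hKM
        _ ≤ B * M := le_mul_of_one_le_left hM0.le hB1
    have hexp1 : 0 ≤ 1 - Real.exp (-(B * M) / m) := by
      rw [sub_nonneg, Real.exp_le_one_iff]
      exact div_nonpos_of_nonpos_of_nonneg (by linarith [hA0]) (by linarith)
    refine mul_le_mul (mul_le_mul_of_nonneg_right (by linarith) hG0.le) ?_ (Real.exp_pos _).le
      (mul_nonneg hexp1 hG0.le)
    rw [Real.exp_le_exp, mul_div_assoc, hexpo, neg_mul]
    refine neg_le_neg ?_
    have h2 : (k0 : ℝ) ^ 2 ≤ (2 * (B * M)) ^ 2 := pow_le_pow_left₀ (by positivity) hfl 2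
    rw [← mul_div_assoc, mul_comm (n : ℝ) m]
    refine div_le_div_of_nonneg_right ?_ (by positivity)
    have e : (2 * (B * M)) ^ 2 = 4 * (B ^ 2 * M ^ 2) := by ring
    rw [e] at h2
    linarith
  · -- upper bound
    have hfl := Nat.floor_le (by positivity : 0 ≤ M / 1024)
    have hfl2 := Nat.lt_floor_add_one (M / 1024)
    set t := ⌊M / 1024⌋₊ with ht
    have ht2 : 2 * m ≤ t := by
      rw [ht]
      refine Nat.le_floor ?_
      push_cast
      linarith
    have htn : 2 * t ≤ n := by
      have : 2 * (t : ℝ) ≤ n := by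
        have : M * 10000 ≤ M * K := mul_le_mul_of_nonneg_left hK1 hM0.le
        linarith
      exact_mod_cast this
    have up := upper_core F m n t x hm hx1 (hq ▸ hxq) hsx ht2 htn hxlow (by
      rw [← hq, ← hM]; linarith)
    rw [← hq, ← hM] at up
    refine up.trans (mul_le_mul ?_ ?_ (Real.exp_pos _).le (by positivity))
    · exact le_mul_of_one_le_left hG0.le (by linarith)
    · rw [Real.exp_le_exp, mul_div_assoc (-(1 / 2 ^ 18)), hexpo, neg_mul]
      refine neg_le_neg ?_
      rw [← mul_div_assoc, div_le_div_iff₀ (by positivity) (by positivity)]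
      have ht3 : M / 2048 ≤ t := by linarith
      have h1 : M * (M / 2048) ≤ M * t := mul_le_mul_of_nonneg_left ht3 hM0.le
      have h2 : 0 ≤ (m : ℝ) * n := by positivity
      have h3 := mul_le_mul_of_nonneg_right h1 h2
      refine le_trans (le_of_eq ?_) (h3.trans (le_of_eq ?_)) <;> ring
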